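/- arXiv:1308.6650 — 2 statements merged into one kernel-verified Lean document; each statement's English description precedes it below -/
import Mathlib

section
/- Suppose 1 < |a_1⋯a_{n+1} b_1⋯b_{n+1}| (so |u| < q), fix i ∈ {1,…,n+1}, and assume a_j b_k ∉ qᶻ for all 1 ≤ j ≤ n+1 and all k ≠ i, and b_k/b_l ∉ qᶻ for all k ≠ l with k, l ≠ i (and that the same nondegeneracy conditions hold after the shift below). Then for every j ∈ {1,…,n+1}: replacing a_j by q a_j throughout (so that u becomes u/q) multiplies the regularization 𝒥̄_i by ∏_{k=1}^{n+1} (1 − a_j⁻¹ b_k⁻¹) / (1 − a_1⁻¹⋯a_{n+1}⁻¹ b_1⁻¹⋯b_{n+1}⁻¹), and replacing b_j by q b_j throughout (so that u becomes u/q) multiplies 𝒥̄_i by ∏_{k=1}^{n+1} (1 − a_k⁻¹ b_j⁻¹) / (1 − a_1⁻¹⋯a_{n+1}⁻¹ b_1⁻¹⋯b_{n+1}⁻¹). (q-difference equations for the regularized truncated dual Dixon–Anderson sum; Proposition 4.3 of the paper.) -/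
/-!
The Vandermonde product of the lattice points `z_k = β_k q ^ ν_k` turns the `n`-fold series into
the `n × n` determinant of the one-variable moments `⟨z ^ l⟩_k = ∑ z ^ l w(z)`, `1 ≤ l ≤ n`, where
`z` runs over the lattice starting at `β_k`; the factor `q ^ ν` contained in `u ^ ν` accounts for
the shift of the exponents by one.

The weight satisfies `w(q z) ∏ (q z - b_j) = w(z) ∏ (z - a_j⁻¹)`. Telescoping `w(z) ∏ (z - b_j)`
gives `⟨P⟩_k = 0` for `P = ∏ (z - b_j) - ∏ (z - a_j⁻¹)`, with no boundary term because `β_k` is one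
of the `b_j`. The polynomial `P` is the same for all lattices and has degree at most `n`.

Replacing `a_j` by `q a_j`, or `b_j` by `q b_j`, multiplies `w(z)` by a constant times
`(z - t) / z`, where `t = a_j⁻¹` or `t = b_j`. Modulo the relation `⟨P⟩_k = 0` this multiplies the
determinant by `P(t) / P(0)`, and both values are explicit since one of the two products in `P`
vanishes at `t`. If the shifted `b_j` is also a base point, its lattice starts one step later, but
the new weight vanishes at the omitted point. The constants that remain are absorbed by
`θ(q x) = -θ(x) / x`.
-/

open scoped BigOperators
open Finset

/-- The infinite q-Pochhammer symbol `(a)_∞ = ∏_{i=0}^∞ (1 - qⁱ a)`. -/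
noncomputable def qp (q a : ℂ) : ℂ := ∏' i : ℕ, (1 - q ^ i * a)

/-- The theta function `θ(a) = (a)_∞ (q/a)_∞`. -/
noncomputable def th (q a : ℂ) : ℂ := qp q a * qp q (q / a)

/-- Summand of the truncated dual Jackson integral of Dixon–Anderson type `J̄(b̂ᵢ)`,
with `u = q a₁⁻¹⋯a_{n+1}⁻¹ b₁⁻¹⋯b_{n+1}⁻¹` and `β = b ∘ i.succAbove`. -/
noncomputable def jbarTerm {n : ℕ} (q : ℂ) (a b : Fin (n + 1) → ℂ) (i : Fin (n + 1))
    (ν : Fin n → ℕ) : ℂ :=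
  (q * (∏ j, a j)⁻¹ * (∏ j, b j)⁻¹) ^ (∑ k, ν k) *
    (∏ k, ∏ j, qp q (q * (b j)⁻¹ * (b (i.succAbove k) * q ^ ν k)) /
        qp q (a j * (b (i.succAbove k) * q ^ ν k))) *
    ∏ k, ∏ l ∈ Finset.Ioi k, (b (i.succAbove k) * q ^ ν k - b (i.succAbove l) * q ^ ν l)

/-- The truncated dual Jackson integral of Dixon–Anderson type `J̄(b̂ᵢ)`. -/
noncomputable def jbarSum {n : ℕ} (q : ℂ) (a b : Fin (n + 1) → ℂ) (i : Fin (n + 1)) : ℂ :=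
  (1 - q) ^ n * ∑' ν : Fin n → ℕ, jbarTerm q a b i ν

/-- The regularization `𝒥̄ᵢ` of the truncated dual Dixon–Anderson sum. -/
noncomputable def jbarReg {n : ℕ} (q : ℂ) (a b : Fin (n + 1) → ℂ) (i : Fin (n + 1)) : ℂ :=
  jbarSum q a b i * (∏ k : Fin n, ∏ j, th q (a j * b (i.succAbove k))) /
    ∏ k : Fin n, ∏ l ∈ Finset.Ioi k,
      b (i.succAbove k) * th q (b (i.succAbove l) / b (i.succAbove k))

open Filter Topology

section Series

variable {R : Type*} [NormedCommRing R]

lemma summable_norm_prod_pi {ι : Type*} {n : ℕ} {f : Fin n → ι → R}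
    (hf : ∀ k, Summable fun m => ‖f k m‖) :
    Summable fun ν : Fin n → ι => ‖∏ k, f k (ν k)‖ := by
  induction n with
  | zero => exact (hasSum_fintype _).summable
  | succ n ih =>
    rw [← (Fin.consEquiv fun _ : Fin (n + 1) => ι).summable_iff]
    refine (Summable.mul_norm (hf 0) (ih fun k => hf k.succ)).congr fun p => ?_
    simp [Fin.prod_univ_succ, Fin.consEquiv]

variable [CompleteSpace R]

lemma hasSum_prod_pi {ι : Type*} {n : ℕ} {f : Fin n → ι → R}
    (hf : ∀ k, Summable fun m => ‖f k m‖) :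
    HasSum (fun ν : Fin n → ι => ∏ k, f k (ν k)) (∏ k, ∑' m, f k m) := by
  induction n with
  | zero => simp
  | succ n ih =>
    have htail : ∀ k : Fin n, Summable fun m => ‖f k.succ m‖ := fun k => hf k.succ
    rw [← (Fin.consEquiv fun _ : Fin (n + 1) => ι).hasSum_iff, Fin.prod_univ_succ,
      ← (ih htail).tsum_eq, tsum_mul_tsum_of_summable_norm (hf 0) (summable_norm_prod_pi htail)]
    convert! (Summable.mul_norm (hf 0) (summable_norm_prod_pi htail)).of_norm.hasSum using 1
    funext p
    simp [Fin.prod_univ_succ, Fin.consEquiv]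

lemma tsum_det {ι : Type*} {n : ℕ} {f : Fin n → Fin n → ι → R}
    (hf : ∀ k l, Summable fun m => ‖f k l m‖) :
    ∑' ν : Fin n → ι, (Matrix.of fun k l => f k l (ν k)).det =
      (Matrix.of fun k l => ∑' m, f k l m).det := by
  have hσ (σ : Equiv.Perm (Fin n)) :
      HasSum (fun ν : Fin n → ι => (Equiv.Perm.sign σ : R) * ∏ k, f k (σ k) (ν k))
        (Equiv.Perm.sign σ * ∏ k, ∑' m, f k (σ k) m) :=
    (hasSum_prod_pi fun k => hf k (σ k)).mul_left _
  simp only [← Matrix.det_transpose (Matrix.of _), Matrix.det_apply', Matrix.transpose_apply,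
    Matrix.of_apply]
  exact (hasSum_sum fun σ _ => hσ σ).tsum_eq

end Series

lemma summable_of_mul_succ_eq_mul {𝕜 : Type*} [NormedField 𝕜] [CompleteSpace 𝕜]
    {f A B : ℕ → 𝕜} {α β : 𝕜} (hA : Tendsto A atTop (𝓝 α)) (hB : Tendsto B atTop (𝓝 β))
    (hαβ : ‖α‖ < ‖β‖) (hf : ∀ ν, f (ν + 1) * B ν = A ν * f ν) : Summable f := by
  have hβ : 0 < ‖β‖ := (norm_nonneg α).trans_lt hαβ
  obtain ⟨r, hαr, hr1⟩ := exists_between ((div_lt_one hβ).2 hαβ)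
  have hlim : ‖α‖ < r * ‖β‖ := (div_lt_iff₀ hβ).1 hαr
  refine summable_of_ratio_norm_eventually_le hr1 ?_
  filter_upwards [hA.norm.eventually_lt (hB.norm.const_mul r) hlim,
    hB.norm.eventually_const_lt hβ] with ν hAB hB0
  refine le_of_mul_le_mul_right ?_ hB0
  calc ‖f (ν + 1)‖ * ‖B ν‖ = ‖A ν‖ * ‖f ν‖ := by rw [← norm_mul, hf, norm_mul]
    _ ≤ r * ‖B ν‖ * ‖f ν‖ := by gcongr
    _ = r * ‖f ν‖ * ‖B ν‖ := by ring

lemma tendsto_const_mul_pow_sub {R : Type*} [SeminormedRing R] {q : R} (hq : ‖q‖ < 1)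
    (x c : R) : Tendsto (fun ν : ℕ => x * q ^ ν - c) atTop (𝓝 (-c)) := by
  simpa using ((tendsto_pow_atTop_nhds_zero_of_norm_lt_one hq).const_mul x).sub_const c

lemma norm_lt_norm_mul_of_one_lt {𝕜 : Type*} [NormedDivisionRing 𝕜] {q c : 𝕜} (hq0 : q ≠ 0)
    (hc : 1 < ‖c‖) : ‖q‖ < ‖q * c‖ := by
  rw [norm_mul]
  exact lt_mul_of_one_lt_right (norm_pos_iff.2 hq0) hc

lemma prod_comp_update_of_eq_mul {ι α M : Type*} [Fintype ι] [DecidableEq ι] [CommMonoid M]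
    (g : α → M) (f : ι → α) {j : ι} {y : α} {s : M} (h : g y = s * g (f j)) :
    ∏ k, g (Function.update f j y k) = s * ∏ k, g (f k) := by
  simp only [Function.apply_update (fun _ => g)]
  rw [prod_update_of_mem (mem_univ j), h, mul_assoc,
    ← prod_eq_mul_prod_sdiff_singleton_of_mem (mem_univ j) fun k => g (f k)]

lemma prod_update_mul {ι M : Type*} [Fintype ι] [DecidableEq ι] [CommMonoid M] (f : ι → M)
    (j : ι) (s : M) : ∏ k, Function.update f j (s * f j) k = s * ∏ k, f k :=
  prod_comp_update_of_eq_mul id f rfl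

lemma prod_prod_Ioi_ite_mul_ite {ι M : Type*} [Fintype ι] [LinearOrder ι]
    [LocallyFiniteOrderTop ι] [LocallyFiniteOrderBot ι] [CommMonoid M] (h : ι → M) (m : ι) :
    ∏ k, ∏ l ∈ Ioi k, (if k = m then h l else 1) * (if l = m then h k else 1) =
      ∏ k ∈ {m}ᶜ, h k := by
  have hleft : ∏ k, ∏ l ∈ Ioi k, (if k = m then h l else 1) = ∏ l ∈ Ioi m, h l := by
    rw [prod_eq_single m (fun k _ hk => by simp [hk]) (by simp)]
    simp
  have hright : ∏ k, ∏ l ∈ Ioi k, (if l = m then h k else 1) = ∏ k ∈ Iio m, h k := by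
    simp only [prod_ite_eq', mem_Ioi, ← prod_filter]
    congr 1
    ext k
    simp
  simp only [prod_mul_distrib]
  rw [hleft, hright, ← Ioi_disjUnion_Iio, prod_disjUnion]

lemma prod_mul_mul_prod_eq_prod_mul_prod_compl {K : Type*} [Field K] {n : ℕ}
    (a : Fin (n + 1) → K) {β : Fin n → K} {m : Fin n} (hm : β m ≠ 0) :
    (∏ l, a l) * β m * ∏ k, β k = (∏ l, -(a l * β m)) * ∏ k ∈ {m}ᶜ, -(β k / β m) := by
  have hsplit := Fintype.prod_eq_mul_prod_compl m fun k => -(β k / β m)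
  rw [div_self hm] at hsplit
  rw [show ∏ k ∈ {m}ᶜ, -(β k / β m) = -∏ k, -(β k / β m) by rw [hsplit]; ring]
  simp only [prod_neg, prod_mul_distrib, prod_div_distrib, prod_const, card_univ,
    Fintype.card_fin]
  rcases neg_one_pow_eq_or K n with hn | hn <;> simp only [pow_succ, hn] <;> field_simp

lemma mul_update_mul_pow_ne_one {ι M : Type*} [DecidableEq ι] [CommMonoid M]
    {q c : M} {x : ι → M} (hx : ∀ k (ν : ℕ), c * (x k * q ^ ν) ≠ 1) (m k : ι) (ν : ℕ) :
    c * (Function.update x m (q * x m) k * q ^ ν) ≠ 1 := by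
  rcases eq_or_ne k m with rfl | hk
  · rw [Function.update_self, mul_comm q, mul_assoc (x k), ← pow_succ']
    exact hx k (ν + 1)
  · rw [Function.update_of_ne hk]
    exact hx k ν

section Determinant

open Polynomial

variable {R : Type*} [CommRing R]

lemma prod_prod_Ioi_sub_eq_neg_one_pow_mul_det_vandermonde {n : ℕ} (z : Fin n → R) :
    ∏ k, ∏ l ∈ Ioi k, (z k - z l) =
      (-1) ^ (∑ k : Fin n, #(Ioi k)) * (Matrix.vandermonde z).det := by
  rw [Matrix.det_vandermonde, ← prod_pow_eq_pow_sum, ← prod_mul_distrib]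
  refine prod_congr rfl fun k _ => ?_
  rw [← prod_const, ← prod_mul_distrib]
  exact prod_congr rfl fun l _ => by ring

/-- The rectangular array `m k l`, `l ≤ n`, bordered on top by the powers of `t`. -/
def powBordered {n : ℕ} (m : Fin n → ℕ → R) (t : R) : Matrix (Fin (n + 1)) (Fin (n + 1)) R :=
  Matrix.of (Matrix.vecCons (fun l => t ^ (l : ℕ)) fun k l => m k l)

lemma det_powBordered {n : ℕ} (m : Fin n → ℕ → R) (t : R) :
    (powBordered m t).det = (Matrix.of fun k l : Fin n => m k (l + 1) - t * m k l).det := by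
  let B : Matrix (Fin (n + 1)) (Fin (n + 1)) R := Matrix.of
    (Matrix.vecCons (Pi.single 0 1) fun k => Fin.cons (m k 0) fun l => m k (l + 1) - t * m k l)
  have hB : (powBordered m t).det = B.det := by
    refine Matrix.det_eq_of_forall_col_eq_smul_add_pred (fun _ => t) (fun i => ?_) fun i l => ?_
    · cases i using Fin.cases <;> simp [powBordered, B]
    · cases i using Fin.cases <;> simp [powBordered, B, pow_succ']
  rw [hB, Matrix.det_succ_row_zero, Fin.sum_univ_succ]
  simp [B, Matrix.submatrix, Matrix.of_apply]

lemma coeff_zero_mul_det_powBordered {n : ℕ} (m : Fin n → ℕ → R) {P : R[X]}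
    (hdeg : P.degree < ↑(n + 1)) (hP : ∀ k, (P.sum fun l c => c * m k l) = 0) (t : R) :
    P.coeff 0 * (powBordered m t).det =
      P.eval t * (Matrix.of fun k l : Fin n => m k (l + 1)).det := by
  have hcol : (fun i => ∑ l : Fin (n + 1), P.coeff l • powBordered m t i l) =
      Pi.single 0 (P.eval t) := by
    funext i
    cases i using Fin.cases with
    | zero => simp [powBordered, eval_eq_sum, ← sum_fin (fun l c => c * t ^ l) (by simp) hdeg]
    | succ k => simp [powBordered, sum_fin (fun l c => c * m k l) (by simp) hdeg, hP]
  have hdet := Matrix.det_updateCol_sum (powBordered m t) 0 fun l => P.coeff l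
  rw [hcol, Fin.val_zero, smul_eq_mul] at hdet
  rw [← hdet, Matrix.det_succ_column_zero, Fin.sum_univ_succ]
  simp [powBordered, Matrix.submatrix]

/-- Both sides are, up to the outer factors, the determinant of `powBordered m t`: subtracting `t`
times the preceding column from each column clears its first row, while replacing the first column
by the combination with coefficients `P.coeff l` clears all its other entries. -/
lemma coeff_zero_mul_det_sub_eq_eval_mul_det {n : ℕ} (m : Fin n → ℕ → R) {P : R[X]}
    (hdeg : P.degree < ↑(n + 1)) (hP : ∀ k, (P.sum fun l c => c * m k l) = 0) (t : R) :
    P.coeff 0 * (Matrix.of fun k l : Fin n => m k (l + 1) - t * m k l).det =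
      P.eval t * (Matrix.of fun k l : Fin n => m k (l + 1)).det := by
  rw [← det_powBordered, coeff_zero_mul_det_powBordered m hdeg hP t]

lemma degree_prod_X_sub_C_sub_prod_X_sub_C_lt {ι : Type*} [Fintype ι] (s t : ι → R) :
    (∏ j, (X - C (s j)) - ∏ j, (X - C (t j))).degree < (Fintype.card ι : WithBot ℕ) := by
  nontriviality R
  have hdeg (r : ι → R) : (∏ j, (X - C (r j))).degree = (Fintype.card ι : WithBot ℕ) := by
    rw [degree_prod_of_monic _ _ fun j _ => monic_X_sub_C (r j)]
    simp
  have hmonic (r : ι → R) : (∏ j, (X - C (r j))).Monic := monic_prod_X_sub_C r univ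
  exact (degree_sub_lt_left ((hdeg s).trans (hdeg t).symm) (hmonic s).ne_zero
    ((hmonic s).trans (hmonic t).symm)).trans_eq (hdeg s)

end Determinant

section Theta

variable {q : ℂ}

lemma qp_eq_one_sub_mul (hq : ‖q‖ < 1) (x : ℂ) : qp q x = (1 - x) * qp q (q * x) := by
  have hsum : Summable fun i : ℕ => ‖-(q ^ i * (q * x))‖ := by
    simp only [norm_neg, norm_mul, norm_pow]
    exact (summable_geometric_of_lt_one (norm_nonneg q) hq).mul_right _
  have hmul : Multipliable fun i : ℕ => 1 - q ^ i * (q * x) := by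
    simpa only [sub_eq_add_neg] using multipliable_one_add_of_summable hsum
  have hshift : (fun i : ℕ => 1 - q ^ (i + 1) * x) = fun i => 1 - q ^ i * (q * x) := by
    funext i
    ring
  rw [qp, qp, tprod_eq_zero_mul' (hshift ▸ hmul), hshift, pow_zero, one_mul]

lemma qp_one (q : ℂ) : qp q 1 = 0 :=
  tprod_of_exists_eq_zero ⟨0, by simp⟩

lemma th_mul_left (hq : ‖q‖ < 1) (hq0 : q ≠ 0) {x : ℂ} (hx : x ≠ 0) :
    th q (q * x) = -x⁻¹ * th q x := by
  rw [th, th, qp_eq_one_sub_mul hq x, show q / (q * x) = x⁻¹ by field_simp,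
    qp_eq_one_sub_mul hq x⁻¹, ← div_eq_mul_inv q x]
  field_simp
  ring

/-- The pairs not involving the index `m` are unchanged, and each pair formed by `m` and `k`, in
either order, acquires the factor `-β_k / β_m`. -/
lemma prod_prod_mul_th_update {ι : Type*} [Fintype ι] [LinearOrder ι] [LocallyFiniteOrderTop ι]
    [LocallyFiniteOrderBot ι] (hq : ‖q‖ < 1) (hq0 : q ≠ 0) {β : ι → ℂ} (hβ : ∀ k, β k ≠ 0)
    (m : ι) :
    ∏ k, ∏ l ∈ Ioi k, Function.update β m (q * β m) k *
        th q (Function.update β m (q * β m) l / Function.update β m (q * β m) k) =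
      (∏ k ∈ {m}ᶜ, -(β k / β m)) * ∏ k, ∏ l ∈ Ioi k, β k * th q (β l / β k) := by
  simp only [← prod_prod_Ioi_ite_mul_ite (fun k => -(β k / β m)), ← prod_mul_distrib]
  refine prod_congr rfl fun k _ => prod_congr rfl fun l hl => ?_
  have hkl : k ≠ l := (mem_Ioi.1 hl).ne
  have hk := hβ k
  have hl := hβ l
  rcases eq_or_ne k m with rfl | hkm
  · have hth := th_mul_left hq hq0 (div_ne_zero hl (mul_ne_zero hq0 hk))
    rw [← mul_div_assoc, mul_div_mul_left _ _ hq0] at hth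
    simp only [Function.update_self, Function.update_of_ne hkl.symm, if_true, if_neg hkl.symm, hth]
    field_simp
  rcases eq_or_ne l m with rfl | hlm
  · have hth := th_mul_left hq hq0 (div_ne_zero hl hk)
    rw [← mul_div_assoc] at hth
    simp only [Function.update_self, Function.update_of_ne hkm, if_true, if_neg hkm, hth]
    field_simp
  · simp [hkm, hlm]

variable {ι κ : Type*} [Fintype ι] [Fintype κ]

lemma prod_prod_th_update_left [DecidableEq ι] (hq : ‖q‖ < 1) (hq0 : q ≠ 0) {a : ι → ℂ}
    {β : κ → ℂ} (ha : ∀ j, a j ≠ 0) (hβ : ∀ k, β k ≠ 0) (j : ι) :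
    ∏ k, ∏ l, th q (Function.update a j (q * a j) l * β k) =
      (∏ k, -(a j * β k))⁻¹ * ∏ k, ∏ l, th q (a l * β k) := by
  rw [← prod_inv_distrib, ← prod_mul_distrib]
  refine prod_congr rfl fun k _ => ?_
  refine prod_comp_update_of_eq_mul (fun y => th q (y * β k)) a ?_
  rw [mul_assoc, th_mul_left hq hq0 (mul_ne_zero (ha j) (hβ k)), inv_neg]

lemma prod_prod_th_update_right [DecidableEq κ] (hq : ‖q‖ < 1) (hq0 : q ≠ 0) {a : ι → ℂ}
    {β : κ → ℂ} (ha : ∀ j, a j ≠ 0) (hβ : ∀ k, β k ≠ 0) (m : κ) :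
    ∏ k, ∏ l, th q (a l * Function.update β m (q * β m) k) =
      (∏ l, -(a l * β m))⁻¹ * ∏ k, ∏ l, th q (a l * β k) := by
  refine prod_comp_update_of_eq_mul (fun y => ∏ l, th q (a l * y)) β ?_
  rw [← prod_inv_distrib, ← prod_mul_distrib]
  refine prod_congr rfl fun l _ => ?_
  rw [mul_left_comm, th_mul_left hq hq0 (mul_ne_zero (ha l) (hβ m)), inv_neg]

end Theta

section RelationPoly

open Polynomial

variable {ι K : Type*} [Fintype ι]

section Field

variable [Field K] {a b : ι → K}

/-- The polynomial `∏ (z - b_j) - ∏ (z - a_j⁻¹)`, whose integral against `dualWeight` vanishes on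
every lattice starting at one of the `b_j`. -/
noncomputable def relationPoly (a b : ι → K) : K[X] :=
  ∏ j, (X - C (b j)) - ∏ j, (X - C (a j)⁻¹)

lemma relationPoly_eval (a b : ι → K) (z : K) :
    (relationPoly a b).eval z = ∏ j, (z - b j) - ∏ j, (z - (a j)⁻¹) := by
  simp [relationPoly, eval_prod]

lemma relationPoly_eval_zero (hb : ∀ j, b j ≠ 0) :
    (relationPoly a b).eval 0 = (∏ j, -b j) * (1 - (∏ j, a j)⁻¹ * (∏ j, b j)⁻¹) := by
  have hB : ∏ j, b j ≠ 0 := prod_ne_zero_iff.2 fun j _ => hb j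
  simp only [relationPoly_eval, zero_sub, prod_neg, prod_inv_distrib]
  field_simp

lemma relationPoly_eval_inv (ha : ∀ j, a j ≠ 0) (hb : ∀ j, b j ≠ 0) (j : ι) :
    (relationPoly a b).eval (a j)⁻¹ = (∏ k, -b k) * ∏ k, (1 - (a j)⁻¹ * (b k)⁻¹) := by
  have hvanish : ∏ k, ((a j)⁻¹ - (a k)⁻¹) = 0 := prod_eq_zero (mem_univ j) (sub_self _)
  rw [relationPoly_eval, hvanish, sub_zero, ← prod_mul_distrib]
  refine prod_congr rfl fun k _ => ?_
  have haj := ha j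
  have hbk := hb k
  field_simp
  ring

lemma relationPoly_eval_right (hb : ∀ j, b j ≠ 0) (j : ι) :
    (relationPoly a b).eval (b j) =
      -(b j ^ Fintype.card ι * ∏ k, (1 - (a k)⁻¹ * (b j)⁻¹)) := by
  have hvanish : ∏ k, (b j - b k) = 0 := prod_eq_zero (mem_univ j) (sub_self _)
  rw [relationPoly_eval, hvanish, zero_sub, Fintype.card, ← prod_const, ← prod_mul_distrib]
  refine congrArg Neg.neg (prod_congr rfl fun k _ => ?_)
  rw [mul_sub, mul_left_comm, mul_inv_cancel₀ (hb j), mul_one, mul_one]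

end Field

variable [NormedField K] {a b : ι → K}

lemma forall_ne_zero_of_lt_norm_prod_mul_prod {r : ℝ} (hr : 0 ≤ r)
    (h : r < ‖(∏ j, a j) * ∏ j, b j‖) : (∀ j, a j ≠ 0) ∧ ∀ j, b j ≠ 0 := by
  obtain ⟨hA, hB⟩ := mul_ne_zero_iff.1 (norm_pos_iff.1 (hr.trans_lt h))
  rw [prod_ne_zero_iff] at hA hB
  exact ⟨fun j => hA j (mem_univ j), fun j => hB j (mem_univ j)⟩

lemma one_sub_inv_prod_mul_inv_prod_ne_zero (hbal : 1 < ‖(∏ j, a j) * ∏ j, b j‖) :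
    1 - (∏ j, a j)⁻¹ * (∏ j, b j)⁻¹ ≠ 0 := by
  rw [← mul_inv, sub_ne_zero]
  intro h
  rw [inv_eq_one.1 h.symm, norm_one] at hbal
  exact lt_irrefl _ hbal

lemma relationPoly_eval_zero_ne_zero (hbal : 1 < ‖(∏ j, a j) * ∏ j, b j‖) :
    (relationPoly a b).eval 0 ≠ 0 := by
  have hb := (forall_ne_zero_of_lt_norm_prod_mul_prod zero_le_one hbal).2
  rw [relationPoly_eval_zero hb]
  exact mul_ne_zero (prod_ne_zero_iff.2 fun j _ => neg_ne_zero.2 (hb j))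
    (one_sub_inv_prod_mul_inv_prod_ne_zero hbal)

end RelationPoly

section Weight

open Polynomial

variable {ι : Type*} [Fintype ι] {q : ℂ} {a b : ι → ℂ} {x : ℂ}

/-- The one-variable weight of the dual Jackson integral at the lattice point `x * q ^ ν`, with the
power of `u = q / ∏ a_j b_j` replaced by that of `u / q`. The factor `q ^ ν` split off in this way
is the lattice point itself, up to the constant `x`. -/
noncomputable def dualWeight (q : ℂ) (a b : ι → ℂ) (x : ℂ) (ν : ℕ) : ℂ :=
  ((∏ j, a j) * ∏ j, b j)⁻¹ ^ ν *
    ((∏ j, qp q (q * (b j)⁻¹ * (x * q ^ ν))) * ∏ j, (qp q (a j * (x * q ^ ν)))⁻¹)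

/-- The moment of order `l` of `dualWeight` on the lattice starting at `x`. -/
noncomputable def dualMoment (q : ℂ) (a b : ι → ℂ) (x : ℂ) (l : ℕ) : ℂ :=
  ∑' ν : ℕ, dualWeight q a b x ν * (x * q ^ ν) ^ l

lemma dualWeight_succ_mul_prod_sub (hq : ‖q‖ < 1) (ha : ∀ j, a j ≠ 0) (hb : ∀ j, b j ≠ 0) {ν : ℕ}
    (hx : ∀ j, a j * (x * q ^ ν) ≠ 1) :
    dualWeight q a b x (ν + 1) * ∏ j, (x * q ^ (ν + 1) - b j) =
      (∏ j, (x * q ^ ν - (a j)⁻¹)) * dualWeight q a b x ν := by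
  have hz : x * q ^ (ν + 1) = q * (x * q ^ ν) := by ring
  simp only [dualWeight, hz]
  generalize x * q ^ ν = z at hx
  have hfactor (j : ι) :
      (a j * b j)⁻¹ * (qp q (q * (b j)⁻¹ * (q * z)) * (qp q (a j * (q * z)))⁻¹) * (q * z - b j) =
        (z - (a j)⁻¹) * (qp q (q * (b j)⁻¹ * z) * (qp q (a j * z))⁻¹) := by
    have haj := ha j
    have hbj := hb j
    have hden : 1 - a j * z ≠ 0 := sub_ne_zero.2 (hx j).symm
    rw [qp_eq_one_sub_mul hq (q * (b j)⁻¹ * z), qp_eq_one_sub_mul hq (a j * z),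
      mul_left_comm q (q * (b j)⁻¹), mul_left_comm q (a j), mul_inv (1 - _)]
    generalize (qp q (a j * (q * z)))⁻¹ = Y
    generalize qp q (q * (b j)⁻¹ * (q * z)) = N
    field_simp
    ring
  have hprod := prod_congr rfl fun j (_ : j ∈ univ) => hfactor j
  simp only [prod_mul_distrib, prod_inv_distrib] at hprod ⊢
  linear_combination ((∏ j, a j) * ∏ j, b j)⁻¹ ^ ν * hprod

lemma summable_dualWeight_mul_pow (hq : ‖q‖ < 1) {l : ℕ}
    (hl : ‖q ^ l‖ < ‖(∏ j, a j) * ∏ j, b j‖) (hx : ∀ j (ν : ℕ), a j * (x * q ^ ν) ≠ 1) :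
    Summable fun ν : ℕ => dualWeight q a b x ν * (x * q ^ ν) ^ l := by
  obtain ⟨ha, hb⟩ := forall_ne_zero_of_lt_norm_prod_mul_prod (norm_nonneg _) hl
  have hnum : Tendsto (fun ν : ℕ => q ^ l * ∏ j, (x * q ^ ν - (a j)⁻¹)) atTop
      (𝓝 (q ^ l * ∏ j, -(a j)⁻¹)) :=
    (tendsto_finsetProd _ fun j _ => tendsto_const_mul_pow_sub hq x _).const_mul _
  have hden : Tendsto (fun ν : ℕ => ∏ j, (x * q ^ (ν + 1) - b j)) atTop (𝓝 (∏ j, -b j)) :=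
    tendsto_finsetProd _ fun j _ =>
      (tendsto_const_mul_pow_sub hq x (b j)).comp (tendsto_add_atTop_nat 1)
  refine summable_of_mul_succ_eq_mul hnum hden ?_ fun ν => ?_
  · have hA : 0 < ∏ j, ‖a j‖ := prod_pos fun j _ => norm_pos_iff.2 (ha j)
    simp only [norm_mul, norm_prod, norm_neg, norm_inv, prod_inv_distrib] at hl ⊢
    rwa [← div_eq_mul_inv, div_lt_iff₀' hA]
  · have hstep := dualWeight_succ_mul_prod_sub hq ha hb (hx · ν)
    linear_combination (x * q ^ (ν + 1)) ^ l * hstep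

lemma summable_dualWeight_mul_pow_of_one_lt (hq : ‖q‖ < 1) (hbal : 1 < ‖(∏ j, a j) * ∏ j, b j‖)
    (hx : ∀ j (ν : ℕ), a j * (x * q ^ ν) ≠ 1) (l : ℕ) :
    Summable fun ν : ℕ => dualWeight q a b x ν * (x * q ^ ν) ^ l := by
  refine summable_dualWeight_mul_pow hq (lt_of_le_of_lt ?_ hbal) hx
  exact (norm_pow q l).trans_le (pow_le_one₀ (norm_nonneg q) hq.le)

/-- The series telescopes; its boundary term at `z = x` vanishes because `x` is one of the `b_j`. -/
lemma relationPoly_sum_dualMoment (hq : ‖q‖ < 1) (hbal : 1 < ‖(∏ j, a j) * ∏ j, b j‖)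
    (hx : ∀ j (ν : ℕ), a j * (x * q ^ ν) ≠ 1) (hxb : x ∈ Set.range b) :
    ((relationPoly a b).sum fun l c => c * dualMoment q a b x l) = 0 := by
  obtain ⟨ha, hb⟩ := forall_ne_zero_of_lt_norm_prod_mul_prod zero_le_one hbal
  have hsummable := summable_dualWeight_mul_pow_of_one_lt hq hbal hx
  let G : ℕ → ℂ := fun ν => dualWeight q a b x ν * ∏ j, (x * q ^ ν - b j)
  have hsum : HasSum (fun ν => G ν - G (ν + 1))
      ((relationPoly a b).sum fun l c => c * dualMoment q a b x l) := by
    refine (hasSum_sum fun l _ => (hsummable l).hasSum.mul_left _).congr_fun fun ν => ?_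
    have heval : ∑ l ∈ (relationPoly a b).support, (relationPoly a b).coeff l *
        (dualWeight q a b x ν * (x * q ^ ν) ^ l) =
        dualWeight q a b x ν * (relationPoly a b).eval (x * q ^ ν) := by
      rw [eval_eq_sum, sum_def, mul_sum]
      exact sum_congr rfl fun l _ => mul_left_comm _ _ _
    rw [heval, relationPoly_eval]
    linear_combination -dualWeight_succ_mul_prod_sub hq ha hb (hx · ν)
  have hG0 : G 0 = 0 := by
    obtain ⟨j, rfl⟩ := hxb
    simp [G, prod_eq_zero (mem_univ j)]
  have hGlim : Tendsto G atTop (𝓝 0) := by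
    have hw := (hsummable 0).tendsto_atTop_zero
    simp only [pow_zero, mul_one] at hw
    simpa [G] using
      hw.mul (tendsto_finsetProd univ fun j _ => tendsto_const_mul_pow_sub hq x (b j))
  have hpartial := hsum.tendsto_sum_nat
  simp only [sum_range_sub', hG0] at hpartial
  simpa using tendsto_nhds_unique hpartial (hGlim.const_sub 0)

lemma dualMoment_succ_of_mul_dualWeight_eq (hq : ‖q‖ < 1) (hbal : 1 < ‖(∏ j, a j) * ∏ j, b j‖)
    (hx : ∀ j (ν : ℕ), a j * (x * q ^ ν) ≠ 1) {a' b' : ι → ℂ} {r t : ℂ}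
    (h : ∀ ν : ℕ, x * q ^ ν * dualWeight q a' b' x ν =
      r * ((x * q ^ ν - t) * dualWeight q a b x ν)) (l : ℕ) :
    dualMoment q a' b' x (l + 1) =
      r * (dualMoment q a b x (l + 1) - t * dualMoment q a b x l) := by
  have hs := summable_dualWeight_mul_pow_of_one_lt hq hbal hx
  rw [dualMoment, dualMoment, dualMoment, ← tsum_mul_left, ← (hs _).tsum_sub ((hs l).mul_left t),
    ← tsum_mul_left]
  exact tsum_congr fun ν => by linear_combination (x * q ^ ν) ^ l * h ν

/-- If `q * x` is one of the `b_j`, the weight vanishes at `x`, so the lattices starting at `x` and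
at `q * x` carry the same sum. -/
lemma dualMoment_mul_left (ha : ∀ j, a j ≠ 0) (hb : ∀ j, b j ≠ 0) (hxb : q * x ∈ Set.range b)
    (l : ℕ) :
    dualMoment q a b (q * x) l = ((∏ j, a j) * ∏ j, b j) * dualMoment q a b x l := by
  have hAB : (∏ j, a j) * ∏ j, b j ≠ 0 :=
    mul_ne_zero (prod_ne_zero_iff.2 fun j _ => ha j) (prod_ne_zero_iff.2 fun j _ => hb j)
  have hzero : dualWeight q a b x 0 = 0 := by
    obtain ⟨j, hj⟩ := hxb
    have hone : q * (b j)⁻¹ * (x * q ^ 0) = 1 := by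
      rw [pow_zero, mul_one, mul_right_comm, ← hj, mul_inv_cancel₀ (hb j)]
    have hprod : ∏ j, qp q (q * (b j)⁻¹ * (x * q ^ 0)) = 0 :=
      prod_eq_zero (mem_univ j) (by rw [hone, qp_one])
    rw [dualWeight, hprod, zero_mul, mul_zero]
  have hsupp : Function.support (fun ν : ℕ => dualWeight q a b x ν * (x * q ^ ν) ^ l) ⊆
      Set.range Nat.succ := by
    intro ν hν
    cases ν with
    | zero => simp [hzero] at hν
    | succ μ => exact ⟨μ, rfl⟩
  rw [dualMoment, dualMoment, ← Nat.succ_injective.tsum_eq hsupp, ← tsum_mul_left]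
  refine tsum_congr fun ν => ?_
  have hz : q * x * q ^ ν = x * q ^ (ν + 1) := by ring
  have hpow : ((∏ j, a j) * ∏ j, b j) * ((∏ j, a j) * ∏ j, b j)⁻¹ ^ (ν + 1) =
      ((∏ j, a j) * ∏ j, b j)⁻¹ ^ ν := by
    rw [pow_succ', mul_inv_cancel_left₀ hAB]
  rw [dualWeight, dualWeight, hz, Nat.succ_eq_add_one, ← hpow]
  ring

variable [DecidableEq ι]

lemma mul_dualWeight_update_left (hq : ‖q‖ < 1) (hq0 : q ≠ 0) {j : ι} (haj : a j ≠ 0) {ν : ℕ}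
    (hx : a j * (x * q ^ ν) ≠ 1) :
    x * q ^ ν * dualWeight q (Function.update a j (q * a j)) b x ν =
      -(a j * x) * ((x * q ^ ν - (a j)⁻¹) * dualWeight q a b x ν) := by
  have hqp : (qp q (q * a j * (x * q ^ ν)))⁻¹ =
      (1 - a j * (x * q ^ ν)) * (qp q (a j * (x * q ^ ν)))⁻¹ := by
    rw [qp_eq_one_sub_mul hq (a j * _), mul_inv, mul_inv_cancel_left₀ (sub_ne_zero.2 hx.symm),
      mul_assoc q]
  rw [dualWeight, dualWeight, prod_update_mul,
    prod_comp_update_of_eq_mul (fun y => (qp q (y * (x * q ^ ν)))⁻¹) a hqp, mul_assoc q, mul_inv q,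
    mul_pow, inv_pow]
  generalize ((∏ j, a j) * ∏ j, b j)⁻¹ = v
  generalize ∏ j, (qp q (a j * (x * q ^ ν)))⁻¹ = Y
  field_simp
  ring

lemma mul_dualWeight_update_right (hq : ‖q‖ < 1) (hq0 : q ≠ 0) {j : ι} (hbj : b j ≠ 0) (ν : ℕ) :
    x * q ^ ν * dualWeight q a (Function.update b j (q * b j)) x ν =
      -(x / b j) * ((x * q ^ ν - b j) * dualWeight q a b x ν) := by
  have hqp : qp q (q * (q * b j)⁻¹ * (x * q ^ ν)) =
      (1 - (b j)⁻¹ * (x * q ^ ν)) * qp q (q * (b j)⁻¹ * (x * q ^ ν)) := by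
    rw [mul_inv, mul_inv_cancel_left₀ hq0, qp_eq_one_sub_mul hq, mul_assoc q]
  rw [dualWeight, dualWeight, prod_update_mul,
    prod_comp_update_of_eq_mul (fun y => qp q (q * y⁻¹ * (x * q ^ ν))) b hqp, mul_left_comm _ q,
    mul_inv q, mul_pow, inv_pow]
  generalize ((∏ j, a j) * ∏ j, b j)⁻¹ = v
  generalize ∏ j, qp q (q * (b j)⁻¹ * (x * q ^ ν)) = X
  field_simp
  ring

end Weight

section MomentDet

variable {n : ℕ} {q : ℂ} {a b : Fin (n + 1) → ℂ} {x : Fin n → ℂ}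

/-- The determinant of the moments of orders `1, …, n` on the `n` lattices starting at the `x k`. -/
noncomputable def momentDet (q : ℂ) (a b : Fin (n + 1) → ℂ) (x : Fin n → ℂ) : ℂ :=
  (Matrix.of fun k l : Fin n => dualMoment q a b (x k) (l + 1)).det

lemma momentDet_of_mul_dualWeight_eq (hq : ‖q‖ < 1) (hbal : 1 < ‖(∏ j, a j) * ∏ j, b j‖)
    (hx : ∀ k j (ν : ℕ), a j * (x k * q ^ ν) ≠ 1) (hxb : ∀ k, x k ∈ Set.range b)
    {a' b' : Fin (n + 1) → ℂ} {r : Fin n → ℂ} {t : ℂ}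
    (h : ∀ k (ν : ℕ), x k * q ^ ν * dualWeight q a' b' (x k) ν =
      r k * ((x k * q ^ ν - t) * dualWeight q a b (x k) ν)) :
    momentDet q a' b' x =
      (∏ k, r k) * ((relationPoly a b).eval t / (relationPoly a b).eval 0) *
        momentDet q a b x := by
  have hP0 := relationPoly_eval_zero_ne_zero hbal
  have hdeg : (relationPoly a b).degree < ↑(n + 1) := by
    simpa [relationPoly] using degree_prod_X_sub_C_sub_prod_X_sub_C_lt b fun j => (a j)⁻¹
  have hdet := coeff_zero_mul_det_sub_eq_eval_mul_det (fun k => dualMoment q a b (x k)) hdeg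
    (fun k => relationPoly_sum_dualMoment hq hbal (hx k) (hxb k)) t
  rw [Polynomial.coeff_zero_eq_eval_zero] at hdet
  have hshift (k l : Fin n) := dualMoment_succ_of_mul_dualWeight_eq hq hbal (hx k) (h k) l
  have hcol := Matrix.det_mul_column r (Matrix.of fun k l : Fin n =>
    dualMoment q a b (x k) (l + 1) - t * dualMoment q a b (x k) l)
  simp only [Matrix.of_apply] at hcol
  simp only [momentDet, hshift, hcol]
  field_simp
  linear_combination (∏ k, r k) * hdet

lemma momentDet_update_left (hq : ‖q‖ < 1) (hq0 : q ≠ 0) (hbal : 1 < ‖(∏ j, a j) * ∏ j, b j‖)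
    (hx : ∀ k j (ν : ℕ), a j * (x k * q ^ ν) ≠ 1) (hxb : ∀ k, x k ∈ Set.range b)
    (j : Fin (n + 1)) :
    momentDet q (Function.update a j (q * a j)) b x =
      (∏ k, -(a j * x k)) * ((∏ k, (1 - (a j)⁻¹ * (b k)⁻¹)) /
        (1 - (∏ k, a k)⁻¹ * (∏ k, b k)⁻¹)) * momentDet q a b x := by
  obtain ⟨ha, hb⟩ := forall_ne_zero_of_lt_norm_prod_mul_prod zero_le_one hbal
  have hB : ∏ k, -b k ≠ 0 := prod_ne_zero_iff.2 fun k _ => neg_ne_zero.2 (hb k)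
  rw [momentDet_of_mul_dualWeight_eq hq hbal hx hxb fun k ν =>
      mul_dualWeight_update_left hq hq0 (ha j) (hx k j ν),
    relationPoly_eval_inv ha hb, relationPoly_eval_zero hb, mul_div_mul_left _ _ hB]

lemma momentDet_update_right (hq : ‖q‖ < 1) (hq0 : q ≠ 0) (hbal : 1 < ‖(∏ j, a j) * ∏ j, b j‖)
    (hx : ∀ k j (ν : ℕ), a j * (x k * q ^ ν) ≠ 1) (hxb : ∀ k, x k ∈ Set.range b)
    (j : Fin (n + 1)) :
    momentDet q a (Function.update b j (q * b j)) x =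
      b j * (∏ k, x k) * (∏ k, b k)⁻¹ * ((∏ k, (1 - (a k)⁻¹ * (b j)⁻¹)) /
        (1 - (∏ k, a k)⁻¹ * (∏ k, b k)⁻¹)) * momentDet q a b x := by
  have hb := (forall_ne_zero_of_lt_norm_prod_mul_prod zero_le_one hbal).2
  have hB : ∏ k, b k ≠ 0 := prod_ne_zero_iff.2 fun k _ => hb k
  have hR := one_sub_inv_prod_mul_inv_prod_ne_zero hbal
  have hbj := hb j
  rw [momentDet_of_mul_dualWeight_eq hq hbal hx hxb fun k ν =>
      mul_dualWeight_update_right hq hq0 hbj ν,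
    relationPoly_eval_right hb, relationPoly_eval_zero hb]
  generalize 1 - (∏ k, a k)⁻¹ * (∏ k, b k)⁻¹ = R at hR
  simp only [prod_neg, prod_div_distrib, prod_const, card_univ, Fintype.card_fin]
  rcases neg_one_pow_eq_or ℂ n with hn | hn <;> simp only [pow_succ, hn] <;> field_simp

lemma momentDet_update_base (ha : ∀ j, a j ≠ 0) (hb : ∀ j, b j ≠ 0) {m : Fin n}
    (hm : q * x m ∈ Set.range b) :
    momentDet q a b (Function.update x m (q * x m)) =
      ((∏ j, a j) * ∏ j, b j) * momentDet q a b x := by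
  have hrow : (Matrix.of fun k l : Fin n =>
      dualMoment q a b (Function.update x m (q * x m) k) (l + 1)) =
      (Matrix.of fun k l : Fin n => dualMoment q a b (x k) (l + 1)).updateRow m
        (((∏ j, a j) * ∏ j, b j) • fun l : Fin n => dualMoment q a b (x m) (l + 1)) := by
    ext k l
    rcases eq_or_ne k m with rfl | hk
    · simp [dualMoment_mul_left ha hb hm]
    · simp [hk]
  rw [momentDet, momentDet, hrow, Matrix.det_updateRow_smul]
  congr 2
  exact Matrix.updateRow_eq_self _ _

end MomentDet

section Jackson

variable {n : ℕ} {q : ℂ} {a b : Fin (n + 1) → ℂ} {i : Fin (n + 1)}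

lemma jbarTerm_eq_det (hb : ∀ j, b j ≠ 0) (ν : Fin n → ℕ) :
    jbarTerm q a b i ν = (-1) ^ (∑ k : Fin n, #(Ioi k)) * (∏ k, i.removeNth b k)⁻¹ *
      (Matrix.of fun k l : Fin n => dualWeight q a b (i.removeNth b k) (ν k) *
        (i.removeNth b k * q ^ ν k) ^ ((l : ℕ) + 1)).det := by
  have hdet : (Matrix.of fun k l : Fin n => dualWeight q a b (i.removeNth b k) (ν k) *
      (i.removeNth b k * q ^ ν k) ^ ((l : ℕ) + 1)).det =
      (∏ k, dualWeight q a b (i.removeNth b k) (ν k) * (i.removeNth b k * q ^ ν k)) *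
        (Matrix.vandermonde fun k => i.removeNth b k * q ^ ν k).det := by
    rw [← Matrix.det_mul_column]
    congr 1
    ext k l
    simp only [Matrix.of_apply, Matrix.vandermonde_apply, pow_succ']
    ring
  have hfactor (k : Fin n) : dualWeight q a b (i.removeNth b k) (ν k) *
      (i.removeNth b k * q ^ ν k) = i.removeNth b k *
        ((q * (∏ j, a j)⁻¹ * (∏ j, b j)⁻¹) ^ ν k *
          ∏ j, qp q (q * (b j)⁻¹ * (i.removeNth b k * q ^ ν k)) /
            qp q (a j * (i.removeNth b k * q ^ ν k))) := by
    simp only [dualWeight, div_eq_mul_inv, prod_mul_distrib, mul_inv, mul_pow]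
    ring
  have hβ : ∏ k, i.removeNth b k ≠ 0 := prod_ne_zero_iff.2 fun k _ => hb _
  rw [hdet, prod_congr rfl fun k _ => hfactor k, prod_mul_distrib, prod_mul_distrib,
    prod_pow_eq_pow_sum, jbarTerm]
  have hV := prod_prod_Ioi_sub_eq_neg_one_pow_mul_det_vandermonde
    fun k => i.removeNth b k * q ^ ν k
  simp only [Fin.removeNth] at hV hβ ⊢
  rw [hV]
  field_simp

lemma jbarSum_eq_momentDet (hq : ‖q‖ < 1) (hbal : ‖q‖ < ‖(∏ j, a j) * ∏ j, b j‖)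
    (hx : ∀ k j (ν : ℕ), a j * (i.removeNth b k * q ^ ν) ≠ 1) :
    jbarSum q a b i = (1 - q) ^ n * ((-1) ^ (∑ k : Fin n, #(Ioi k)) *
      (∏ k, i.removeNth b k)⁻¹ * momentDet q a b (i.removeNth b)) := by
  have hb := (forall_ne_zero_of_lt_norm_prod_mul_prod (norm_nonneg q) hbal).2
  have hsummable (k l : Fin n) : Summable fun ν : ℕ =>
      ‖dualWeight q a b (i.removeNth b k) ν * (i.removeNth b k * q ^ ν) ^ ((l : ℕ) + 1)‖ := by
    refine (summable_dualWeight_mul_pow hq (lt_of_le_of_lt ?_ hbal) (hx k)).norm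
    rw [norm_pow]
    exact pow_le_of_le_one (norm_nonneg q) hq.le (Nat.succ_ne_zero _)
  simp only [jbarSum, jbarTerm_eq_det hb, tsum_mul_left, momentDet, dualMoment]
  rw [tsum_det hsummable]

lemma removeNth_mem_range (k : Fin n) : i.removeNth b k ∈ Set.range b :=
  Set.mem_range_self _

lemma norm_lt_norm_prod_mul_prod_update (hq0 : q ≠ 0) (hbal : 1 < ‖(∏ j, a j) * ∏ j, b j‖)
    (j : Fin (n + 1)) : ‖q‖ < ‖(∏ k, a k) * ∏ k, Function.update b j (q * b j) k‖ := by
  rw [prod_update_mul, mul_left_comm]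
  exact norm_lt_norm_mul_of_one_lt hq0 hbal

lemma jbarSum_update_left (hq : ‖q‖ < 1) (hq0 : q ≠ 0) (hbal : 1 < ‖(∏ j, a j) * ∏ j, b j‖)
    (hx : ∀ k j (ν : ℕ), a j * (i.removeNth b k * q ^ ν) ≠ 1) (j : Fin (n + 1)) :
    jbarSum q (Function.update a j (q * a j)) b i =
      (∏ k, -(a j * i.removeNth b k)) * ((∏ k, (1 - (a j)⁻¹ * (b k)⁻¹)) /
        (1 - (∏ k, a k)⁻¹ * (∏ k, b k)⁻¹)) * jbarSum q a b i := by
  have hbal' : ‖q‖ < ‖(∏ k, Function.update a j (q * a j) k) * ∏ k, b k‖ := by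
    rw [prod_update_mul, mul_assoc]
    exact norm_lt_norm_mul_of_one_lt hq0 hbal
  have hx' (k : Fin n) (l : Fin (n + 1)) (ν : ℕ) :
      Function.update a j (q * a j) l * (i.removeNth b k * q ^ ν) ≠ 1 := by
    simp only [mul_left_comm (a _)] at hx
    rw [mul_left_comm]
    exact mul_update_mul_pow_ne_one (hx k) j l ν
  rw [jbarSum_eq_momentDet hq hbal' hx', jbarSum_eq_momentDet hq (hq.trans hbal) hx,
    momentDet_update_left hq hq0 hbal hx removeNth_mem_range]
  ring

lemma jbarSum_update_right_self (hq : ‖q‖ < 1) (hq0 : q ≠ 0)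
    (hbal : 1 < ‖(∏ j, a j) * ∏ j, b j‖)
    (hx : ∀ k j (ν : ℕ), a j * (i.removeNth b k * q ^ ν) ≠ 1) :
    jbarSum q a (Function.update b i (q * b i)) i =
      (∏ k, (1 - (a k)⁻¹ * (b i)⁻¹)) / (1 - (∏ k, a k)⁻¹ * (∏ k, b k)⁻¹) * jbarSum q a b i := by
  have hB : ∏ k, b k ≠ 0 := right_ne_zero_of_mul (norm_pos_iff.1 (zero_lt_one.trans hbal))
  have hbase := Fin.removeNth_update i (q * b i) b
  have hprod : b i * (∏ k, i.removeNth b k) * (∏ k, b k)⁻¹ = 1 := by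
    rw [Fin.prod_univ_succAbove b i] at hB ⊢
    exact mul_inv_cancel₀ hB
  rw [jbarSum_eq_momentDet hq (norm_lt_norm_prod_mul_prod_update hq0 hbal i) (by rwa [hbase]),
    hbase, momentDet_update_right hq hq0 hbal hx removeNth_mem_range, hprod,
    jbarSum_eq_momentDet hq (hq.trans hbal) hx]
  ring

lemma jbarSum_update_right_succAbove (hq : ‖q‖ < 1) (hq0 : q ≠ 0)
    (hbal : 1 < ‖(∏ j, a j) * ∏ j, b j‖)
    (hx : ∀ k j (ν : ℕ), a j * (i.removeNth b k * q ^ ν) ≠ 1) (m : Fin n) :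
    jbarSum q a (Function.update b (i.succAbove m) (q * b (i.succAbove m))) i =
      (∏ k, a k) * i.removeNth b m * (∏ k, i.removeNth b k) *
        ((∏ k, (1 - (a k)⁻¹ * (b (i.succAbove m))⁻¹)) /
          (1 - (∏ k, a k)⁻¹ * (∏ k, b k)⁻¹)) * jbarSum q a b i := by
  set j := i.succAbove m
  set b' := Function.update b j (q * b j)
  obtain ⟨ha, hb⟩ := forall_ne_zero_of_lt_norm_prod_mul_prod zero_le_one hbal
  have hbal' : ‖q‖ < ‖(∏ k, a k) * ∏ k, b' k‖ := norm_lt_norm_prod_mul_prod_update hq0 hbal j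
  have hb'0 := (forall_ne_zero_of_lt_norm_prod_mul_prod (norm_nonneg q) hbal').2
  have hbase : i.removeNth b' = Function.update (i.removeNth b) m (q * i.removeNth b m) :=
    Fin.removeNth_update_succAbove i m (q * b j) b
  have hx' : ∀ k l (ν : ℕ), a l * (i.removeNth b' k * q ^ ν) ≠ 1 := by
    rw [hbase]
    exact fun k l => mul_update_mul_pow_ne_one (fun k => hx k l) m k
  have hmem : q * i.removeNth b m ∈ Set.range b' := ⟨j, Function.update_self ..⟩
  have hB : ∏ k, b k ≠ 0 := prod_ne_zero_iff.2 fun k _ => hb k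
  have hβ : ∏ k, i.removeNth b k ≠ 0 := prod_ne_zero_iff.2 fun k _ => hb _
  rw [jbarSum_eq_momentDet hq hbal' hx', hbase, prod_update_mul,
    momentDet_update_base ha hb'0 hmem,
    momentDet_update_right hq hq0 hbal hx removeNth_mem_range, prod_update_mul,
    jbarSum_eq_momentDet hq (hq.trans hbal) hx,
    show b j = i.removeNth b m from rfl]
  field_simp

lemma jbarReg_eq_div_removeNth (q : ℂ) (a b : Fin (n + 1) → ℂ) (i : Fin (n + 1)) :
    jbarReg q a b i = jbarSum q a b i * (∏ k, ∏ j, th q (a j * i.removeNth b k)) /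
      ∏ k, ∏ l ∈ Ioi k, i.removeNth b k * th q (i.removeNth b l / i.removeNth b k) :=
  rfl

lemma jbarReg_update_left (hq : ‖q‖ < 1) (hq0 : q ≠ 0) (hbal : 1 < ‖(∏ j, a j) * ∏ j, b j‖)
    (hx : ∀ k j (ν : ℕ), a j * (i.removeNth b k * q ^ ν) ≠ 1) (j : Fin (n + 1)) :
    jbarReg q (Function.update a j (q * a j)) b i =
      (∏ k, (1 - (a j)⁻¹ * (b k)⁻¹)) / (1 - (∏ k, a k)⁻¹ * (∏ k, b k)⁻¹) * jbarReg q a b i := by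
  obtain ⟨ha, hb⟩ := forall_ne_zero_of_lt_norm_prod_mul_prod zero_le_one hbal
  have hscalar : ∏ k, -(a j * i.removeNth b k) ≠ 0 :=
    prod_ne_zero_iff.2 fun k _ => neg_ne_zero.2 (mul_ne_zero (ha j) (hb _))
  have hth := prod_prod_th_update_left hq hq0 ha (β := i.removeNth b) (fun k => hb _) j
  rw [jbarReg_eq_div_removeNth, jbarReg_eq_div_removeNth, jbarSum_update_left hq hq0 hbal hx, hth]
  field_simp

lemma jbarReg_update_right (hq : ‖q‖ < 1) (hq0 : q ≠ 0) (hbal : 1 < ‖(∏ j, a j) * ∏ j, b j‖)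
    (hx : ∀ k j (ν : ℕ), a j * (i.removeNth b k * q ^ ν) ≠ 1) (j : Fin (n + 1)) :
    jbarReg q a (Function.update b j (q * b j)) i =
      (∏ k, (1 - (a k)⁻¹ * (b j)⁻¹)) / (1 - (∏ k, a k)⁻¹ * (∏ k, b k)⁻¹) * jbarReg q a b i := by
  obtain ⟨ha, hb⟩ := forall_ne_zero_of_lt_norm_prod_mul_prod zero_le_one hbal
  obtain rfl | ⟨m, rfl⟩ := Fin.eq_self_or_eq_succAbove i j
  · rw [jbarReg_eq_div_removeNth, jbarReg_eq_div_removeNth,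
      jbarSum_update_right_self hq hq0 hbal hx, Fin.removeNth_update, mul_assoc, mul_div_assoc]
  · have hβ (k : Fin n) : i.removeNth b k ≠ 0 := hb _
    have hbase := Fin.removeNth_update_succAbove i m (q * i.removeNth b m) b
    have hscalar := prod_mul_mul_prod_eq_prod_mul_prod_compl a (hβ m)
    have ha0 : ∏ l, -(a l * i.removeNth b m) ≠ 0 :=
      prod_ne_zero_iff.2 fun l _ => neg_ne_zero.2 (mul_ne_zero (ha l) (hβ m))
    have hβ0 : ∏ k ∈ {m}ᶜ, -(i.removeNth b k / i.removeNth b m) ≠ 0 :=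
      prod_ne_zero_iff.2 fun k _ => neg_ne_zero.2 (div_ne_zero (hβ k) (hβ m))
    rw [jbarReg_eq_div_removeNth, jbarReg_eq_div_removeNth,
      jbarSum_update_right_succAbove hq hq0 hbal hx, hscalar,
      show b (i.succAbove m) = i.removeNth b m from rfl, hbase,
      prod_prod_th_update_right hq hq0 ha hβ, prod_prod_mul_th_update hq hq0 hβ]
    generalize ∏ l, -(a l * i.removeNth b m) = s at ha0
    field_simp

end Jackson

theorem jbar_reg_q_difference_general {q : ℂ} (hq0 : q ≠ 0) (hq1 : ‖q‖ < 1) {n : ℕ}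
    {a b : Fin (n + 1) → ℂ} (hbal : 1 < ‖(∏ j, a j) * ∏ j, b j‖) {i : Fin (n + 1)}
    (hab : ∀ j k, k ≠ i → ∀ m : ℕ, a j * (b k * q ^ m) ≠ 1)
    (_hbb : ∀ k l, k ≠ l → k ≠ i → l ≠ i → ∀ m : ℤ, b k / b l ≠ q ^ m) :
    (∀ j, jbarReg q (Function.update a j (q * a j)) b i =
        (∏ k, (1 - (a j)⁻¹ * (b k)⁻¹)) / (1 - (∏ k, a k)⁻¹ * (∏ k, b k)⁻¹) *
          jbarReg q a b i) ∧
      ∀ j, jbarReg q a (Function.update b j (q * b j)) i =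
        (∏ k, (1 - (a k)⁻¹ * (b j)⁻¹)) / (1 - (∏ k, a k)⁻¹ * (∏ k, b k)⁻¹) *
          jbarReg q a b i :=
  have hx (k : Fin n) (j : Fin (n + 1)) (ν : ℕ) : a j * (i.removeNth b k * q ^ ν) ≠ 1 :=
    hab j (i.succAbove k) (i.succAbove_ne k) ν
  ⟨jbarReg_update_left hq1 hq0 hbal hx, jbarReg_update_right hq1 hq0 hbal hx⟩

/-- q-difference equations for the regularized truncated dual Dixon–Anderson sum. -/
theorem jbar_reg_q_difference
    (q : ℝ) (hq0 : 0 < q) (hq1 : q < 1) (n : ℕ) (hn : 1 ≤ n)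
    (a b : Fin (n + 1) → ℂ) (ha : ∀ i, a i ≠ 0) (hb : ∀ i, b i ≠ 0)
    (hbal : 1 < ‖(∏ j, a j) * ∏ j, b j‖)
    (i : Fin (n + 1))
    (hab : ∀ j k, k ≠ i → ∀ m : ℤ, a j * b k ≠ (q : ℂ) ^ m)
    (hbb : ∀ k l, k ≠ l → k ≠ i → l ≠ i → ∀ m : ℤ, b k / b l ≠ (q : ℂ) ^ m) :
    (∀ j, jbarReg (q : ℂ) (Function.update a j ((q : ℂ) * a j)) b i =
        (∏ k, (1 - (a j)⁻¹ * (b k)⁻¹)) / (1 - (∏ k, a k)⁻¹ * (∏ k, b k)⁻¹) *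
          jbarReg (q : ℂ) a b i) ∧
      ∀ j, jbarReg (q : ℂ) a (Function.update b j ((q : ℂ) * b j)) i =
        (∏ k, (1 - (a k)⁻¹ * (b j)⁻¹)) / (1 - (∏ k, a k)⁻¹ * (∏ k, b k)⁻¹) *
          jbarReg (q : ℂ) a b i := by
  have hqC : (q : ℂ) ≠ 0 := Complex.ofReal_ne_zero.2 hq0.ne'
  have hnorm : ‖(q : ℂ)‖ < 1 := by rwa [Complex.norm_of_nonneg hq0.le]
  refine jbar_reg_q_difference_general hqC hnorm hbal (fun j k hk m h => ?_) hbb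
  rw [← mul_assoc] at h
  exact hab j k hk (-m) (by rw [zpow_neg, zpow_natCast, eq_inv_of_mul_eq_one_left h])
end

section
/- Suppose q < |a_1⋯a_{n+1} b_1⋯b_{n+1}| and a_j b_k ∉ q^{−ℕ} for all 1 ≤ j ≤ n+1 and 1 ≤ k ≤ n. Then the truncated dual Dixon–Anderson sum and the truncated dual Milne–Gustafson sum are related by J̄(b̂_{n+1}) = Ī(u; (b_1,…,b_n)) · ∏_{i=1}^n (q a_i⁻¹ b_{n+1}⁻¹)_∞ / (a_{n+1} b_i)_∞, where Ī is the normalized dual Milne–Gustafson sum in the n parameters a_1,…,a_n, b_1,…,b_n. (Corollary 4.6 of the paper: the Milne–Gustafson sum as a limiting case of the Dixon–Anderson sum.) -/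
/-!
The Vandermonde product turns the `n`-fold sum of a product weight into the determinant of its
one-dimensional moments. If `s ∏ α_j = ∏ β_j`, then the function
`∏ (1 - β_j z) - s ∏ (1 - α_j z)` of `z`, multiplied by `s^m` and the weight
`∏ (q β_j z)_∞ / (α_j z)_∞`, telescopes along `z = y q^m`, and it has degree at most `n`, so it is
a linear relation among `n + 1` consecutive moments whenever the boundary term vanishes, that is
whenever some `β_j y = 1`. Linear algebra of the `n × (n + 1)` moment matrix converts it into a
contiguity relation: with the extra factor `(C z)_∞ / (B z)_∞` in the weight, where
`C = s ∏ a_i ∏ b_i B`, the sum is `∏ (1 - C / a_i) / (1 - B b_i)` times the sum with the factor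
`(q C z)_∞ / (q B z)_∞` instead. For `B = a_{n+1}` and `C = q / b_{n+1}` the sum is the
Dixon–Anderson one; iterating removes the extra factor in the limit, which leaves the
Milne–Gustafson sum times the accumulated product `∏ (C / a_i)_∞ / (B b_i)_∞`.
-/

open scoped BigOperators
open Finset

/-- Summand of the truncated dual Jackson integral of Dixon–Anderson type
`J̄(b̂_{n+1})`, with `u = q a₁⁻¹⋯a_{n+1}⁻¹ b₁⁻¹⋯b_{n+1}⁻¹`. -/
noncomputable def jbarLastTerm {n : ℕ} (q : ℂ) (a b : Fin (n + 1) → ℂ) (ν : Fin n → ℕ) : ℂ :=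
  (q * (∏ j, a j)⁻¹ * (∏ j, b j)⁻¹) ^ (∑ k, ν k) *
    (∏ k, ∏ j, qp q (q * (b j)⁻¹ * (b (Fin.castSucc k) * q ^ ν k)) /
        qp q (a j * (b (Fin.castSucc k) * q ^ ν k))) *
    ∏ k, ∏ l ∈ Finset.Ioi k, (b (Fin.castSucc k) * q ^ ν k - b (Fin.castSucc l) * q ^ ν l)

/-- The truncated dual Jackson integral of Dixon–Anderson type `J̄(b̂_{n+1})`. -/
noncomputable def jbarLastSum {n : ℕ} (q : ℂ) (a b : Fin (n + 1) → ℂ) : ℂ :=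
  (1 - q) ^ n * ∑' ν : Fin n → ℕ, jbarLastTerm q a b ν

/-- Summand of the normalized dual Jackson integral of Milne–Gustafson type. -/
noncomputable def mgDualTerm {n : ℕ} (q s : ℂ) (a b y : Fin n → ℂ) (ν : Fin n → ℤ) : ℂ :=
  s ^ (∑ i, ν i) *
    (∏ i, ∏ j, qp q (q * (b j)⁻¹ * (y i * q ^ ν i)) / qp q (a j * (y i * q ^ ν i))) *
    ∏ i, ∏ j ∈ Finset.Ioi i, (y i * q ^ ν i - y j * q ^ ν j)

/-- The normalized dual Jackson integral of Milne–Gustafson type `Ī(s;y)`. -/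
noncomputable def mgDualSum {n : ℕ} (q s : ℂ) (a b y : Fin n → ℂ) : ℂ :=
  (1 - q) ^ n * ∑' ν : Fin n → ℤ, mgDualTerm q s a b y ν

namespace DualMG

open Filter Topology

/-! ### Multiple sums as determinants -/

section MultipleSums

variable {n : ℕ} {ι R : Type*} [NormedCommRing R]

lemma summable_norm_pi_prod {g : Fin n → ι → R} (hg : ∀ k, Summable fun i => ‖g k i‖) :
    Summable fun ν : Fin n → ι => ‖∏ k, g k (ν k)‖ := by
  induction n with
  | zero => exact (hasSum_fintype _).summable
  | succ n ih =>
    have h := (hg 0).mul_norm (ih (g := fun k => g k.succ) fun k => hg k.succ)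
    rw [← (Fin.consEquiv fun _ => ι).summable_iff]
    simpa [Function.comp_def, Fin.prod_univ_succ] using h

lemma hasSum_pi_prod [CompleteSpace R] {g : Fin n → ι → R} (hg : ∀ k, Summable fun i => ‖g k i‖) :
    HasSum (fun ν : Fin n → ι => ∏ k, g k (ν k)) (∏ k, ∑' i, g k i) := by
  rw [(summable_norm_pi_prod hg).of_norm.hasSum_iff]
  induction n with
  | zero => simp
  | succ n ih =>
    have htail := summable_norm_pi_prod (g := fun k => g k.succ) fun k => hg k.succ
    rw [← (Fin.consEquiv fun _ => ι).tsum_eq, Fin.prod_univ_succ,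
      ← ih (g := fun k => g k.succ) fun k => hg k.succ,
      tsum_mul_tsum_of_summable_norm (hg 0) htail]
    simp [Fin.prod_univ_succ]

lemma hasSum_det [CompleteSpace R] {f : Fin n → Fin n → ι → R}
    (hf : ∀ k j, Summable fun i => ‖f k j i‖) :
    HasSum (fun ν : Fin n → ι => (Matrix.of fun k j => f k j (ν k)).det)
      (Matrix.of fun k j => ∑' i, f k j i).det := by
  simp only [← Matrix.det_transpose (Matrix.of _), Matrix.det_apply', Matrix.transpose_apply,
    Matrix.of_apply]
  exact hasSum_sum fun σ _ => (hasSum_pi_prod fun k => hf k (σ k)).mul_left _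

end MultipleSums

/-! ### Determinants bordered by a row -/

section BorderedDet

open Matrix

variable {n : ℕ} {R : Type*} [CommRing R]

lemma det_cons_pow (c : R) (x : Matrix (Fin n) (Fin (n + 1)) R) :
    (of (Fin.cons (fun j => c ^ (j : ℕ)) x : Fin (n + 1) → Fin (n + 1) → R)).det =
      (of fun k j : Fin n => x k j.succ - c * x k j.castSucc).det := by
  set A : Matrix (Fin (n + 1)) (Fin (n + 1)) R := of (Fin.cons (fun j => c ^ (j : ℕ)) x)
  let D : Matrix (Fin (n + 1)) (Fin (n + 1)) R := of fun i =>
    Fin.cons (A i 0) fun j => A i j.succ - c * A i j.castSucc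
  have hAD : A.det = D.det :=
    det_eq_of_forall_col_eq_smul_add_pred (fun _ => c) (fun _ => rfl) (by simp [D])
  have hA_zero (j) : A 0 j = c ^ (j : ℕ) := rfl
  have hD_zero : D 0 = Pi.single 0 1 := by
    ext j
    cases j using Fin.cases <;> simp [D, hA_zero, pow_succ']
  rw [hAD, det_succ_row_zero, Fin.sum_univ_succ]
  simp only [hD_zero, Pi.single_eq_same, Pi.single_eq_of_ne (Fin.succ_ne_zero _), mul_zero,
    zero_mul, sum_const_zero, add_zero, Fin.val_zero, pow_zero, one_mul]
  rfl

lemma last_mul_det_cons (r : Fin (n + 1) → R) {x : Matrix (Fin n) (Fin (n + 1)) R}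
    {τ : Fin (n + 1) → R} (hτ : x *ᵥ τ = 0) :
    τ (Fin.last n) * (of (Fin.cons r x : Fin (n + 1) → Fin (n + 1) → R)).det =
      (-1) ^ n * (τ ⬝ᵥ r) * (x.submatrix id Fin.castSucc).det := by
  set A : Matrix (Fin (n + 1)) (Fin (n + 1)) R := of (Fin.cons r x)
  have hcol_zero : ∑ j, τ j • A 0 j = τ ⬝ᵥ r := rfl
  have hcol_succ (k : Fin n) : ∑ j, τ j • A k.succ j = 0 :=
    (dotProduct_comm _ _).trans (congrFun hτ k)
  rw [← smul_eq_mul, ← det_updateCol_sum, det_succ_column _ (Fin.last n), Fin.sum_univ_succ]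
  simp only [updateCol_self, hcol_zero, hcol_succ, submatrix_updateCol_succAbove, mul_zero,
    zero_mul, sum_const_zero, add_zero, Fin.val_zero, Fin.val_last, zero_add]
  rw [Fin.succAbove_last]
  rfl

lemma last_mul_det_sub_mul (c : R) {x : Matrix (Fin n) (Fin (n + 1)) R}
    {τ : Fin (n + 1) → R} (hτ : x *ᵥ τ = 0) :
    τ (Fin.last n) * (of fun k j : Fin n => x k j.succ - c * x k j.castSucc).det =
      (-1) ^ n * (∑ j, τ j * c ^ (j : ℕ)) * (x.submatrix id Fin.castSucc).det := by
  rw [← det_cons_pow, last_mul_det_cons _ hτ, dotProduct]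

end BorderedDet

/-! ### The infinite q-Pochhammer symbol -/

section QPochhammer

variable {q : ℂ}

lemma summable_norm_neg_pow_mul (hq : ‖q‖ < 1) (c : ℂ) :
    Summable fun i : ℕ => ‖-(q ^ i * c)‖ := by
  simpa using (summable_geometric_of_lt_one (norm_nonneg q) hq).mul_right ‖c‖

lemma multipliable_one_sub_pow_mul (hq : ‖q‖ < 1) (c : ℂ) :
    Multipliable fun i : ℕ => 1 - q ^ i * c := by
  simpa only [sub_eq_add_neg] using
    multipliable_one_add_of_summable (summable_norm_neg_pow_mul hq c)

lemma qp_eq_one_sub_mul (hq : ‖q‖ < 1) (c : ℂ) : qp q c = (1 - c) * qp q (q * c) := by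
  have hshift (i : ℕ) : q ^ i * (q * c) = q ^ (i + 1) * c := by ring
  have hmul := multipliable_one_sub_pow_mul hq (q * c)
  simp only [hshift] at hmul
  simp only [qp, hshift]
  simpa only [pow_zero, one_mul] using tprod_eq_zero_mul' (f := fun i => 1 - q ^ i * c) hmul

lemma qp_eq_zero {c : ℂ} {m : ℕ} (h : q ^ m * c = 1) : qp q c = 0 :=
  tprod_of_exists_eq_zero ⟨m, sub_eq_zero.2 h.symm⟩

lemma qp_ne_zero (hq : ‖q‖ < 1) {c : ℂ} (h : ∀ m : ℕ, c * q ^ m ≠ 1) : qp q c ≠ 0 := by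
  have hfactor (i : ℕ) : 1 + -(q ^ i * c) ≠ 0 := by
    rw [← sub_eq_add_neg, mul_comm]
    exact sub_ne_zero.2 (h i).symm
  simpa only [qp, sub_eq_add_neg] using
    tprod_one_add_ne_zero_of_summable hfactor (summable_norm_neg_pow_mul hq c)

lemma tendsto_qp_nhds_zero (hq : ‖q‖ < 1) : Tendsto (qp q) (𝓝 0) (𝓝 1) := by
  have hbound : ∀ᶠ c : ℂ in 𝓝 0, ∀ i : ℕ, ‖-(q ^ i * c)‖ ≤ ‖q‖ ^ i := by
    filter_upwards [Metric.closedBall_mem_nhds (0 : ℂ) one_pos] with c hc i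
    rw [norm_neg, norm_mul, norm_pow]
    exact mul_le_of_le_one_right (by positivity) (mem_closedBall_zero_iff.1 hc)
  have hterm (i : ℕ) : Tendsto (fun c : ℂ => -(q ^ i * c)) (𝓝 0) (𝓝 (-(q ^ i * 0))) :=
    (tendsto_id.const_mul _).neg
  simpa only [← sub_eq_add_neg, mul_zero, sub_zero, tprod_one] using!
    tendsto_tprod_one_add_of_dominated_convergence
      (summable_geometric_of_lt_one (norm_nonneg q) hq) hterm hbound

lemma tendsto_prod_range_qp (hq : ‖q‖ < 1) (c : ℂ) :
    Tendsto (fun N => ∏ m ∈ range N, (1 - q ^ m * c)) atTop (𝓝 (qp q c)) :=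
  (multipliable_one_sub_pow_mul hq c).tendsto_prod_tprod_nat

lemma tendsto_qp_div_qp_nhds_zero (hq : ‖q‖ < 1) (β α : ℂ) :
    Tendsto (fun w => qp q (β * w) / qp q (α * w)) (𝓝 0) (𝓝 1) := by
  have hqp (c : ℂ) : Tendsto (fun w => qp q (c * w)) (𝓝 0) (𝓝 1) :=
    (tendsto_qp_nhds_zero hq).comp ((continuous_const_mul c).tendsto' 0 0 (mul_zero c))
  simpa only [div_one] using! (hqp β).div (hqp α) one_ne_zero

end QPochhammer

/-! ### Quotients of q-Pochhammer symbols -/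

section QPochhammerRatio

variable {ι : Type*} [Fintype ι] {q : ℂ}

/-- The product of the quotients `(β_j w)_∞ / (α_j w)_∞`, as a function of `w`; the weights of the
Jackson integrals are of this form. -/
noncomputable def qpRatio (q : ℂ) (β α : ι → ℂ) (w : ℂ) : ℂ :=
  ∏ j, qp q (β j * w) / qp q (α j * w)

lemma tendsto_qpRatio_nhds_zero (hq : ‖q‖ < 1) (β α : ι → ℂ) :
    Tendsto (qpRatio q β α) (𝓝 0) (𝓝 1) := by
  simpa only [prod_const_one] using!
    tendsto_finsetProd univ fun j _ => tendsto_qp_div_qp_nhds_zero hq (β j) (α j)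

lemma qpRatio_eq_prod_mul (hq : ‖q‖ < 1) (β α : ι → ℂ) (w : ℂ) :
    qpRatio q β α w = (∏ j, (1 - β j * w)) * qpRatio q (fun j => q * β j) α w := by
  simp only [qpRatio, ← prod_mul_distrib, mul_assoc, ← mul_div_assoc, ← qp_eq_one_sub_mul hq]

lemma qpRatio_mul_left (hq : ‖q‖ < 1) (β : ι → ℂ) {α : ι → ℂ} {w : ℂ} (hα : ∀ j, α j * w ≠ 1) :
    qpRatio q β α (q * w) = (∏ j, (1 - α j * w)) * qpRatio q (fun j => q * β j) α w := by
  simp only [qpRatio, ← prod_mul_distrib]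
  refine prod_congr rfl fun j _ => ?_
  rw [qp_eq_one_sub_mul hq (α j * w), ← mul_div_assoc,
    mul_div_mul_left _ _ (sub_ne_zero.2 (hα j).symm), mul_left_comm, mul_left_comm (α j), mul_assoc]

lemma qpRatio_eq_zero {β : ι → ℂ} {j : ι} {w : ℂ} (α : ι → ℂ) (h : β j * w = 1) :
    qpRatio q β α w = 0 :=
  prod_eq_zero (mem_univ j) (by rw [qp_eq_zero (m := 0) (by simpa using h), zero_div])

end QPochhammerRatio

/-! ### Jackson sums and their moments -/

section JacksonSums

variable {n : ℕ} {q s : ℂ} {W : ℂ → ℂ}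

/-- The one-dimensional Jackson sum `∑_{m ≥ 0} s^m W(z) z^i` over the lattice `z = y q^m`. -/
noncomputable def jacksonMoment (q s : ℂ) (W : ℂ → ℂ) (y : ℂ) (i : ℕ) : ℂ :=
  ∑' m : ℕ, s ^ m * (W (y * q ^ m) * (y * q ^ m) ^ i)

/-- The `n`-dimensional truncated Jackson sum of the product weight `∏ W(z_k)` times the Vandermonde
product `∏_{k < l} (z_k - z_l)` over the lattice `z_k = y_k q^{ν_k}`, `ν ∈ ℕⁿ`. -/
noncomputable def jacksonSum (q s : ℂ) (W : ℂ → ℂ) (y : Fin n → ℂ) : ℂ :=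
  ∑' ν : Fin n → ℕ, (∏ k, s ^ ν k * W (y k * q ^ ν k)) *
    ∏ k, ∏ l ∈ Ioi k, (y k * q ^ ν k - y l * q ^ ν l)

lemma jacksonSum_congr {V : ℂ → ℂ} {y : Fin n → ℂ}
    (h : ∀ k m, W (y k * q ^ m) = V (y k * q ^ m)) : jacksonSum q s W y = jacksonSum q s V y := by
  simp only [jacksonSum, h]

lemma tendsto_mul_pow_nhds_zero (hq : ‖q‖ < 1) (y : ℂ) :
    Tendsto (fun m : ℕ => y * q ^ m) atTop (𝓝 0) := by
  simpa only [mul_zero] using (tendsto_pow_atTop_nhds_zero_of_norm_lt_one hq).const_mul y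

lemma exists_norm_le_of_tendsto (hq : ‖q‖ < 1) {x : ℂ} (hW : Tendsto W (𝓝 0) (𝓝 x)) (y : ℂ) :
    ∃ M, ∀ m : ℕ, ‖W (y * q ^ m)‖ ≤ M := by
  obtain ⟨M, hM⟩ := (hW.comp (tendsto_mul_pow_nhds_zero hq y)).norm.bddAbove_range
  exact ⟨M, fun m => hM (Set.mem_range_self m)⟩

lemma summable_norm_pow_mul_weight (hq : ‖q‖ < 1) (hs : ‖s‖ < 1) {x : ℂ}
    (hW : Tendsto W (𝓝 0) (𝓝 x)) (y : ℂ) : Summable fun m : ℕ => ‖s ^ m * W (y * q ^ m)‖ := by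
  obtain ⟨M, hM⟩ := exists_norm_le_of_tendsto hq hW y
  refine ((summable_geometric_of_lt_one (norm_nonneg s) hs).mul_right M).of_nonneg_of_le
    (fun _ => norm_nonneg _) fun m => ?_
  rw [norm_mul, norm_pow]
  gcongr
  exact hM m

lemma summable_norm_jacksonMoment (hq : ‖q‖ < 1) (hs : ‖s‖ < 1) {x : ℂ}
    (hW : Tendsto W (𝓝 0) (𝓝 x)) (y : ℂ) (i : ℕ) :
    Summable fun m : ℕ => ‖s ^ m * (W (y * q ^ m) * (y * q ^ m) ^ i)‖ :=
  summable_norm_pow_mul_weight (W := fun w => W w * w ^ i) hq hs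
    (hW.mul (tendsto_id.pow i)) y

lemma jacksonMoment_mul_one_sub (hq : ‖q‖ < 1) (hs : ‖s‖ < 1) {x : ℂ}
    (hW : Tendsto W (𝓝 0) (𝓝 x)) (c y : ℂ) (i : ℕ) :
    jacksonMoment q s (fun w => W w * (1 - c * w)) y i =
      jacksonMoment q s W y i - c * jacksonMoment q s W y (i + 1) := by
  have hsum (j) := (summable_norm_jacksonMoment hq hs hW y j).of_norm
  simp only [jacksonMoment]
  rw [← tsum_mul_left, ← (hsum i).tsum_sub ((hsum (i + 1)).mul_left c)]
  exact tsum_congr fun m => by ring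

lemma jacksonMoment_mul_self (q s : ℂ) (W : ℂ → ℂ) (y : ℂ) (i : ℕ) :
    jacksonMoment q s (fun w => W w * w) y i = jacksonMoment q s W y (i + 1) := by
  simp only [jacksonMoment, pow_succ', mul_assoc]

lemma jacksonSum_eq_det (hq : ‖q‖ < 1) (hs : ‖s‖ < 1) {x : ℂ} (hW : Tendsto W (𝓝 0) (𝓝 x))
    (y : Fin n → ℂ) :
    jacksonSum q s W y = (Matrix.of fun k j : Fin n => jacksonMoment q s W (y k) j.rev).det := by
  refine (tsum_congr fun ν => ?_).trans
    (hasSum_det fun k j => summable_norm_jacksonMoment hq hs hW (y k) (j.rev : ℕ)).tsum_eq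
  have hvandermonde : ∏ k, ∏ l ∈ Ioi k, (y k * q ^ ν k - y l * q ^ ν l) =
      (Matrix.projVandermonde 1 fun k => y k * q ^ ν k).det := by
    simp [Matrix.det_projVandermonde]
  rw [hvandermonde, ← Matrix.det_mul_column]
  simp [Matrix.projVandermonde_apply, mul_assoc]

lemma tendsto_jacksonMoment_mul_pow (hq : ‖q‖ < 1) (hs : ‖s‖ < 1) {x : ℂ}
    (hW : Tendsto W (𝓝 0) (𝓝 x)) {V : ℂ → ℂ} (hV : Tendsto V (𝓝 0) (𝓝 1)) (y : ℂ) (i : ℕ) :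
    Tendsto (fun N : ℕ => jacksonMoment q s (fun w => W w * V (q ^ N * w)) y i) atTop
      (𝓝 (jacksonMoment q s W y i)) := by
  obtain ⟨M, hM⟩ := exists_norm_le_of_tendsto hq hV y
  refine tendsto_tsum_of_dominated_convergence
    ((summable_norm_jacksonMoment hq hs hW y i).mul_right M) (fun m => ?_)
    (Eventually.of_forall fun N m => ?_)
  · have hVm : Tendsto (fun N : ℕ => V (q ^ N * (y * q ^ m))) atTop (𝓝 1) :=
      hV.comp (by simpa only [mul_comm] using tendsto_mul_pow_nhds_zero hq (y * q ^ m))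
    simpa only [mul_one] using ((hVm.const_mul (W (y * q ^ m))).mul_const _).const_mul (s ^ m)
  · have hVM : ‖V (q ^ N * (y * q ^ m))‖ ≤ M := by
      rw [mul_left_comm, ← pow_add]
      exact hM (N + m)
    rw [mul_right_comm (W _), ← mul_assoc (s ^ m), norm_mul]
    gcongr

lemma tendsto_jacksonSum_mul_pow (hq : ‖q‖ < 1) (hs : ‖s‖ < 1) {x : ℂ}
    (hW : Tendsto W (𝓝 0) (𝓝 x)) {V : ℂ → ℂ} (hV : Tendsto V (𝓝 0) (𝓝 1)) (y : Fin n → ℂ) :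
    Tendsto (fun N : ℕ => jacksonSum q s (fun w => W w * V (q ^ N * w)) y) atTop
      (𝓝 (jacksonSum q s W y)) := by
  have hWV (N : ℕ) : Tendsto (fun w => W w * V (q ^ N * w)) (𝓝 0) (𝓝 (x * 1)) :=
    hW.mul (hV.comp ((continuous_const_mul (q ^ N)).tendsto' 0 0 (mul_zero _)))
  simp only [jacksonSum_eq_det hq hs hW, fun N => jacksonSum_eq_det hq hs (hWV N) y]
  refine (continuous_id.matrix_det.tendsto _).comp ?_
  exact tendsto_pi_nhds.2 fun k => tendsto_pi_nhds.2 fun j =>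
    tendsto_jacksonMoment_mul_pow hq hs hW hV (y k) j.rev

end JacksonSums

/-! ### The contiguity relation -/

section Contiguity

open Polynomial

/-- The polynomial `∏ (X - β_j) - s ∏ (X - α_j)`. Its reversal multiplies the weight in the
telescoping sum `tsum_pow_mul_qpRatio`, so its coefficients give a linear relation among moments. -/
noncomputable def contiguityPoly {ι : Type*} [Fintype ι] (s : ℂ) (β α : ι → ℂ) : ℂ[X] :=
  ∏ j, (X - C (β j)) - C s * ∏ j, (X - C (α j))

section Fintype

variable {ι : Type*} [Fintype ι] {q s : ℂ} {β α : ι → ℂ}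

lemma eval_contiguityPoly (s : ℂ) (β α : ι → ℂ) (c : ℂ) :
    (contiguityPoly s β α).eval c = ∏ j, (c - β j) - s * ∏ j, (c - α j) := by
  simp [contiguityPoly, eval_prod]

lemma natDegree_contiguityPoly_le (s : ℂ) (β α : ι → ℂ) :
    (contiguityPoly s β α).natDegree ≤ Fintype.card ι := by
  refine (natDegree_sub_le _ _).trans (max_le ?_ ((natDegree_C_mul_le _ _).trans ?_)) <;>
    rw [natDegree_finsetProd_X_sub_C_eq_card, card_univ]

lemma coeff_card_contiguityPoly (s : ℂ) (β α : ι → ℂ) :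
    (contiguityPoly s β α).coeff (Fintype.card ι) = 1 - s := by
  have hcoeff (γ : ι → ℂ) : (∏ j, (X - C (γ j))).coeff (Fintype.card ι) = 1 := by
    have h := (monic_prod_X_sub_C γ univ).coeff_natDegree
    rwa [natDegree_finsetProd_X_sub_C_eq_card, card_univ] at h
  simp [contiguityPoly, hcoeff]

/-- The sum telescopes: its terms are the differences of `s ^ m * qpRatio q β α (y * q ^ m)`. -/
lemma tsum_pow_mul_qpRatio (hq : ‖q‖ < 1) (hs : ‖s‖ < 1) (β : ι → ℂ) {y : ℂ}
    (hα : ∀ j (m : ℕ), α j * (y * q ^ m) ≠ 1) :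
    ∑' m : ℕ, s ^ m * (qpRatio q (fun j => q * β j) α (y * q ^ m) *
      (∏ j, (1 - β j * (y * q ^ m)) - s * ∏ j, (1 - α j * (y * q ^ m)))) =
      qpRatio q β α y := by
  set K : ℕ → ℂ := fun m => s ^ m * qpRatio q β α (y * q ^ m)
  have hK : Summable K :=
    (summable_norm_pow_mul_weight hq hs (tendsto_qpRatio_nhds_zero hq β α) y).of_norm
  have hterm (m : ℕ) : s ^ m * (qpRatio q (fun j => q * β j) α (y * q ^ m) *
      (∏ j, (1 - β j * (y * q ^ m)) - s * ∏ j, (1 - α j * (y * q ^ m)))) = K m - K (m + 1) := by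
    have hsucc : y * q ^ (m + 1) = q * (y * q ^ m) := by ring
    simp only [K]
    rw [hsucc, qpRatio_mul_left hq β fun j => hα j m, qpRatio_eq_prod_mul hq β]
    ring
  rw [tsum_congr hterm, hK.tsum_sub ((summable_nat_add_iff 1).2 hK), hK.tsum_eq_zero_add]
  simp [K]

end Fintype

variable {n : ℕ} {q s : ℂ} {β α : Fin (n + 1) → ℂ}

lemma sum_coeff_contiguityPoly_mul_pow (hbal : s * ∏ j, α j = ∏ j, β j) (c : ℂ) :
    (∑ j : Fin (n + 1), (contiguityPoly s β α).coeff (j + 1) * c ^ (j : ℕ)) * c =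
      ∏ j, (c - β j) - s * ∏ j, (c - α j) := by
  have hdegree : (contiguityPoly s β α).natDegree < n + 2 := by
    simpa [Nat.lt_succ_iff] using natDegree_contiguityPoly_le s β α
  have hcoeff_zero : (contiguityPoly s β α).coeff 0 = 0 := by
    rw [coeff_zero_eq_eval_zero, eval_contiguityPoly]
    simp only [zero_sub, prod_neg]
    rw [← hbal]
    ring
  rw [← eval_contiguityPoly, eval_eq_sum_range' hdegree, sum_range_succ', hcoeff_zero, zero_mul,
    add_zero, sum_mul, sum_range]
  simp only [pow_succ, mul_assoc]

lemma sum_coeff_contiguityPoly_mul_pow_rev (hbal : s * ∏ j, α j = ∏ j, β j) {w : ℂ} (hw : w ≠ 0) :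
    ∑ j : Fin (n + 1), (contiguityPoly s β α).coeff (j + 1) * w ^ (j.rev : ℕ) =
      ∏ j, (1 - β j * w) - s * ∏ j, (1 - α j * w) := by
  have hpow (j : Fin (n + 1)) : w ^ (j.rev : ℕ) = w ^ n * w⁻¹ ^ (j : ℕ) := by
    rw [inv_pow, eq_mul_inv_iff_mul_eq₀ (pow_ne_zero _ hw), ← pow_add, Fin.rev_add_cast]
  have hprod (γ : Fin (n + 1) → ℂ) : ∏ j, (1 - γ j * w) = w ^ (n + 1) * ∏ j, (w⁻¹ - γ j) := by
    rw [← Fin.prod_const, ← prod_mul_distrib]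
    exact prod_congr rfl fun j _ => by field_simp
  rw [hprod, hprod, mul_left_comm, ← mul_sub, ← sum_coeff_contiguityPoly_mul_pow hbal w⁻¹]
  simp only [hpow, mul_left_comm _ (w ^ n), ← mul_sum]
  rw [pow_succ, mul_assoc, mul_left_comm w, mul_inv_cancel₀ hw, mul_one]

lemma sum_coeff_contiguityPoly_mul_jacksonMoment (hq0 : q ≠ 0) (hq : ‖q‖ < 1) (hs : ‖s‖ < 1)
    (hbal : s * ∏ j, α j = ∏ j, β j) {y : ℂ} (hα : ∀ j (m : ℕ), α j * (y * q ^ m) ≠ 1)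
    (hβ : ∃ j, β j * y = 1) :
    ∑ j : Fin (n + 1), jacksonMoment q s (qpRatio q (fun j => q * β j) α) y j.rev *
      (contiguityPoly s β α).coeff (j + 1) = 0 := by
  obtain ⟨j₀, hj₀⟩ := hβ
  have hz (m : ℕ) : y * q ^ m ≠ 0 :=
    mul_ne_zero (right_ne_zero_of_mul_eq_one hj₀) (pow_ne_zero m hq0)
  have hmoment (i : ℕ) : HasSum _ (jacksonMoment q s (qpRatio q (fun j => q * β j) α) y i) :=
    (summable_norm_jacksonMoment hq hs (tendsto_qpRatio_nhds_zero hq _ α) y i).of_norm.hasSum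
  rw [← (hasSum_sum fun j _ => (hmoment j.rev).mul_right _).tsum_eq, ← qpRatio_eq_zero α hj₀,
    ← tsum_pow_mul_qpRatio hq hs β hα]
  refine tsum_congr fun m => ?_
  rw [← sum_coeff_contiguityPoly_mul_pow_rev hbal (hz m), mul_sum, mul_sum]
  exact sum_congr rfl fun j _ => by ring

/-- Both sums are determinants formed from the same `n × (n + 1)` matrix of moments, which
annihilates the coefficients of `contiguityPoly`. -/
lemma mul_jacksonSum_qpRatio_mul_one_sub (hq0 : q ≠ 0) (hq : ‖q‖ < 1) (hs : ‖s‖ < 1)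
    (hbal : s * ∏ j, α j = ∏ j, β j) {y : Fin n → ℂ}
    (hα : ∀ j k (m : ℕ), α j * (y k * q ^ m) ≠ 1) (hβ : ∀ k, ∃ j, β j * y k = 1) (c : ℂ) :
    (1 - s) * c * jacksonSum q s (fun w => qpRatio q (fun j => q * β j) α w * (1 - c * w)) y =
      (-1) ^ n * (∏ j, (c - β j) - s * ∏ j, (c - α j)) *
        jacksonSum q s (fun w => qpRatio q (fun j => q * β j) α w * w) y := by
  set W := qpRatio q (fun j => q * β j) α
  have hW : Tendsto W (𝓝 0) (𝓝 1) := tendsto_qpRatio_nhds_zero hq _ α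
  have hWmul : Tendsto (fun w => W w * w) (𝓝 0) (𝓝 (1 * 0)) := hW.mul tendsto_id
  have hWsub : Tendsto (fun w => W w * (1 - c * w)) (𝓝 0) (𝓝 (1 * (1 - c * 0))) :=
    hW.mul (tendsto_const_nhds.sub (tendsto_id.const_mul c))
  let x : Matrix (Fin n) (Fin (n + 1)) ℂ := Matrix.of fun k j => jacksonMoment q s W (y k) j.rev
  have hx : x.mulVec (fun j => (contiguityPoly s β α).coeff (j + 1)) = 0 := funext fun k =>
    sum_coeff_contiguityPoly_mul_jacksonMoment hq0 hq hs hbal (fun j m => hα j k m) (hβ k)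
  have hlast : (contiguityPoly s β α).coeff (Fin.last n + 1) = 1 - s := by
    simpa using coeff_card_contiguityPoly s β α
  have hdet_sub : (Matrix.of fun k j : Fin n => x k j.succ - c * x k j.castSucc).det =
      jacksonSum q s (fun w => W w * (1 - c * w)) y := by
    rw [jacksonSum_eq_det hq hs hWsub]
    simp only [x, Matrix.of_apply, jacksonMoment_mul_one_sub hq hs hW, Fin.rev_castSucc,
      Fin.rev_succ, Fin.val_castSucc, Fin.val_succ]
  have hdet_mul : (x.submatrix id Fin.castSucc).det = jacksonSum q s (fun w => W w * w) y := by
    rw [jacksonSum_eq_det hq hs hWmul]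
    simp only [jacksonMoment_mul_self]
    refine congrArg Matrix.det (Matrix.ext fun k j => ?_)
    simp only [x, Matrix.submatrix_apply, Matrix.of_apply, Fin.rev_castSucc, Fin.val_succ, id]
  have h := last_mul_det_sub_mul c hx
  rw [hlast, hdet_sub, hdet_mul] at h
  rw [← sum_coeff_contiguityPoly_mul_pow hbal]
  linear_combination c * h

end Contiguity

/-! ### From the Milne–Gustafson weight to the Dixon–Anderson weight -/

section DualWeight

variable {n : ℕ} {q s B C : ℂ} {a b : Fin n → ℂ}

/-- The weight of the dual Milne–Gustafson sum with parameters `a`, `b`, times the quotient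
`(C w)_∞ / (B w)_∞`. It is the weight of the dual Dixon–Anderson sum when `B = a_{n+1}` and
`C = q / b_{n+1}`. -/
noncomputable def dualWeight (q : ℂ) (a b : Fin n → ℂ) (B C w : ℂ) : ℂ :=
  qpRatio q (fun j => q * (b j)⁻¹) a w * (qp q (C * w) / qp q (B * w))

lemma exists_jacksonSum_dualWeight_contiguity (hq0 : q ≠ 0) (hq : ‖q‖ < 1) (hs : ‖s‖ < 1)
    (hb : ∀ i, b i ≠ 0) (hC : C = s * ((∏ i, a i) * ∏ i, b i) * B)
    (hab : ∀ j k (m : ℕ), a j * (b k * q ^ m) ≠ 1) (hBb : ∀ k (m : ℕ), B * (b k * q ^ m) ≠ 1) :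
    ∃ E, (1 - s) * C * jacksonSum q s (dualWeight q a b B C) b =
        s * (∏ i, (C - a i)) * (B - C) * E ∧
      (1 - s) * B * jacksonSum q s (dualWeight q a b (q * B) (q * C)) b =
        (∏ i, (B - (b i)⁻¹)) * (B - C) * E := by
  let α : Fin (n + 1) → ℂ := Fin.snoc a B
  let β : Fin (n + 1) → ℂ := Fin.snoc (fun i => (b i)⁻¹) C
  have hprod_b : ∏ i, b i ≠ 0 := prod_ne_zero_iff.2 fun i _ => hb i
  have hbal : s * ∏ j, α j = ∏ j, β j := by
    simp only [α, β, Fin.prod_snoc, prod_inv_distrib, hC]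
    field_simp
  have hα (j k) (m : ℕ) : α j * (b k * q ^ m) ≠ 1 := by
    cases j using Fin.lastCases <;> simp [α, hab, hBb]
  have hβ (k) : ∃ j, β j * b k = 1 := ⟨k.castSucc, by simp [β, hb]⟩
  have hW_C (w : ℂ) : qpRatio q (fun j => q * β j) α w * (1 - C * w) = dualWeight q a b B C w := by
    simp only [dualWeight, qpRatio, α, β, Fin.prod_univ_castSucc, Fin.snoc_castSucc, Fin.snoc_last]
    rw [qp_eq_one_sub_mul hq (C * w), ← mul_assoc q C]
    ring
  have hW_B (k) (m : ℕ) : qpRatio q (fun j => q * β j) α (b k * q ^ m) * (1 - B * (b k * q ^ m)) =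
      dualWeight q a b (q * B) (q * C) (b k * q ^ m) := by
    simp only [dualWeight, qpRatio, α, β, Fin.prod_univ_castSucc, Fin.snoc_castSucc, Fin.snoc_last]
    rw [qp_eq_one_sub_mul hq (B * _), mul_assoc (∏ j, _), ← mul_assoc q B, div_mul_eq_mul_div,
      mul_comm _ (1 - B * _), mul_div_mul_left _ _ (sub_ne_zero.2 (hBb k m).symm)]
  have hrel := mul_jacksonSum_qpRatio_mul_one_sub hq0 hq hs hbal hα hβ
  have hrel_C := hrel C
  have hrel_B := hrel B
  simp only [hW_C] at hrel_C
  rw [jacksonSum_congr hW_B] at hrel_B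
  have heval (γ : Fin n → ℂ) (c d : ℂ) : ∏ j, (c - (Fin.snoc γ d : Fin (n + 1) → ℂ) j) =
      (∏ i, (c - γ i)) * (c - d) := by
    simp only [Fin.prod_univ_castSucc, Fin.snoc_castSucc, Fin.snoc_last]
  simp only [α, β, heval, sub_self, mul_zero, zero_sub, sub_zero] at hrel_B hrel_C
  let E := jacksonSum q s (fun w => qpRatio q (fun j => q * β j) α w * w) b
  exact ⟨(-1) ^ n * E, by linear_combination hrel_C, by linear_combination hrel_B⟩

lemma jacksonSum_dualWeight_mul_prod_one_sub (hq0 : q ≠ 0) (hq : ‖q‖ < 1) (hs0 : s ≠ 0)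
    (hs : ‖s‖ < 1) (ha : ∀ i, a i ≠ 0) (hb : ∀ i, b i ≠ 0) (hB : B ≠ 0)
    (hC : C = s * ((∏ i, a i) * ∏ i, b i) * B) (hab : ∀ j k (m : ℕ), a j * (b k * q ^ m) ≠ 1)
    (hBb : ∀ k (m : ℕ), B * (b k * q ^ m) ≠ 1) :
    jacksonSum q s (dualWeight q a b B C) b * ∏ i, (1 - B * b i) =
      (∏ i, (1 - C * (a i)⁻¹)) * jacksonSum q s (dualWeight q a b (q * B) (q * C)) b := by
  have hC0 : C ≠ 0 := hC ▸ mul_ne_zero (mul_ne_zero hs0 (mul_ne_zero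
    (prod_ne_zero_iff.2 fun i _ => ha i) (prod_ne_zero_iff.2 fun i _ => hb i))) hB
  have hs1 : 1 - s ≠ 0 := sub_ne_zero.2 fun h => by simp [← h] at hs
  obtain ⟨E, hE_C, hE_B⟩ := exists_jacksonSum_dualWeight_contiguity hq0 hq hs hb hC hab hBb
  have hprod_C : ∏ i, (C - a i) = (∏ i, -a i) * ∏ i, (1 - C * (a i)⁻¹) := by
    rw [← prod_mul_distrib]
    refine prod_congr rfl fun i _ => ?_
    field_simp [ha i]
    ring
  have hprod_B : (∏ i, b i) * ∏ i, (B - (b i)⁻¹) = (-1) ^ n * ∏ i, (1 - B * b i) := by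
    rw [← Fin.prod_const, ← prod_mul_distrib, ← prod_mul_distrib]
    refine prod_congr rfl fun i _ => ?_
    field_simp [hb i]
    ring
  rw [hprod_C, prod_neg, card_univ, Fintype.card_fin] at hE_C
  refine mul_left_cancel₀ (mul_ne_zero (mul_ne_zero hs1 hC0) hB) ?_
  linear_combination B * (∏ i, (1 - B * b i)) * hE_C - C * (∏ i, (1 - C * (a i)⁻¹)) * hE_B -
    (B - C) * E * (∏ i, (1 - C * (a i)⁻¹)) *
      ((∏ i, (B - (b i)⁻¹)) * hC + s * (∏ i, a i) * B * hprod_B)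

lemma jacksonSum_dualWeight_mul_prod_range (hq0 : q ≠ 0) (hq : ‖q‖ < 1) (hs0 : s ≠ 0)
    (hs : ‖s‖ < 1) (ha : ∀ i, a i ≠ 0) (hb : ∀ i, b i ≠ 0) (hB : B ≠ 0)
    (hC : C = s * ((∏ i, a i) * ∏ i, b i) * B) (hab : ∀ j k (m : ℕ), a j * (b k * q ^ m) ≠ 1)
    (hBb : ∀ k (m : ℕ), B * (b k * q ^ m) ≠ 1) (N : ℕ) :
    jacksonSum q s (dualWeight q a b B C) b * ∏ i, ∏ m ∈ range N, (1 - q ^ m * (B * b i)) =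
      (∏ i, ∏ m ∈ range N, (1 - q ^ m * (C * (a i)⁻¹))) *
        jacksonSum q s (dualWeight q a b (q ^ N * B) (q ^ N * C)) b := by
  induction N with
  | zero => simp
  | succ N ih =>
    have hBb_N (k) (m : ℕ) : q ^ N * B * (b k * q ^ m) ≠ 1 := by
      convert hBb k (N + m) using 1
      ring
    have hstep := jacksonSum_dualWeight_mul_prod_one_sub hq0 hq hs0 hs ha hb
      (mul_ne_zero (pow_ne_zero N hq0) hB) (by rw [hC]; ring) hab hBb_N (C := q ^ N * C)
    simp only [← mul_assoc q, ← pow_succ', mul_assoc (q ^ N)] at hstep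
    simp only [prod_range_succ, prod_mul_distrib]
    linear_combination (∏ i, (1 - q ^ N * (B * b i))) * ih +
      (∏ i, ∏ m ∈ range N, (1 - q ^ m * (C * (a i)⁻¹))) * hstep

lemma tendsto_jacksonSum_dualWeight (hq : ‖q‖ < 1) (hs : ‖s‖ < 1) (a b : Fin n → ℂ) (B C : ℂ)
    (y : Fin n → ℂ) :
    Tendsto (fun N : ℕ => jacksonSum q s (dualWeight q a b (q ^ N * B) (q ^ N * C)) y) atTop
      (𝓝 (jacksonSum q s (qpRatio q (fun j => q * (b j)⁻¹) a) y)) := by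
  have hscale (N : ℕ) (c w : ℂ) : q ^ N * c * w = c * (q ^ N * w) := by ring
  refine (tendsto_jacksonSum_mul_pow hq hs (tendsto_qpRatio_nhds_zero hq _ a)
    (tendsto_qp_div_qp_nhds_zero hq C B) y).congr fun N => jacksonSum_congr fun k m => ?_
  simp only [dualWeight, hscale]

lemma jacksonSum_dualWeight_mul_prod_qp (hq0 : q ≠ 0) (hq : ‖q‖ < 1) (hs0 : s ≠ 0)
    (hs : ‖s‖ < 1) (ha : ∀ i, a i ≠ 0) (hb : ∀ i, b i ≠ 0) (hB : B ≠ 0)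
    (hC : C = s * ((∏ i, a i) * ∏ i, b i) * B) (hab : ∀ j k (m : ℕ), a j * (b k * q ^ m) ≠ 1)
    (hBb : ∀ k (m : ℕ), B * (b k * q ^ m) ≠ 1) :
    jacksonSum q s (dualWeight q a b B C) b * ∏ i, qp q (B * b i) =
      (∏ i, qp q (C * (a i)⁻¹)) * jacksonSum q s (qpRatio q (fun j => q * (b j)⁻¹) a) b := by
  have hleft := (tendsto_finsetProd univ fun i _ => tendsto_prod_range_qp hq (B * b i)).const_mul
    (jacksonSum q s (dualWeight q a b B C) b)
  have hright := (tendsto_finsetProd univ fun i _ => tendsto_prod_range_qp hq (C * (a i)⁻¹)).mul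
    (tendsto_jacksonSum_dualWeight hq hs a b B C b)
  exact tendsto_nhds_unique hleft (hright.congr fun N =>
    (jacksonSum_dualWeight_mul_prod_range hq0 hq hs0 hs ha hb hB hC hab hBb N).symm)

end DualWeight

/-! ### The two Jackson integrals -/

section JacksonIntegrals

variable {n : ℕ} {q s : ℂ}

lemma jbarLastSum_eq_jacksonSum (q : ℂ) (a b : Fin (n + 1) → ℂ) :
    jbarLastSum q a b = (1 - q) ^ n * jacksonSum q (q * (∏ j, a j)⁻¹ * (∏ j, b j)⁻¹)
      (dualWeight q (fun k => a k.castSucc) (fun k => b k.castSucc) (a (Fin.last n))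
        (q * (b (Fin.last n))⁻¹)) fun k => b k.castSucc := by
  simp only [jbarLastSum, jbarLastTerm, jacksonSum, dualWeight, qpRatio, prod_mul_distrib,
    prod_pow_eq_pow_sum, Fin.prod_univ_castSucc]

lemma mgDualTerm_eq_zero (hq0 : q ≠ 0) (s : ℂ) (a : Fin n → ℂ) {b : Fin n → ℂ} {k : Fin n}
    (hb : b k ≠ 0) {ν : Fin n → ℤ} (hν : ν k < 0) : mgDualTerm q s a b b ν = 0 := by
  obtain ⟨m, hm⟩ := Int.exists_eq_neg_ofNat (Int.add_one_le_iff.2 hν)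
  have hνk : ν k = -(m : ℤ) - 1 := eq_sub_of_add_eq hm
  have hqp : qp q (q * (b k)⁻¹ * (b k * q ^ ν k)) = 0 := by
    refine qp_eq_zero (m := m) ?_
    rw [hνk, zpow_sub₀ hq0, zpow_neg, zpow_natCast, zpow_one]
    field_simp
  have hprod : ∏ i, ∏ j, qp q (q * (b j)⁻¹ * (b i * q ^ ν i)) / qp q (a j * (b i * q ^ ν i)) = 0 :=
    prod_eq_zero (mem_univ k) (prod_eq_zero (mem_univ k) (by rw [hqp, zero_div]))
  rw [mgDualTerm, hprod, mul_zero, zero_mul]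

lemma mgDualSum_self_eq_jacksonSum (hq0 : q ≠ 0) (s : ℂ) (a : Fin n → ℂ) {b : Fin n → ℂ}
    (hb : ∀ i, b i ≠ 0) :
    mgDualSum q s a b b =
      (1 - q) ^ n * jacksonSum q s (qpRatio q (fun j => q * (b j)⁻¹) a) b := by
  have hinj : Function.Injective fun (ν : Fin n → ℕ) k => (ν k : ℤ) :=
    fun _ _ h => funext fun k => Nat.cast_injective (congrFun h k)
  have hsupport : Function.support (mgDualTerm q s a b b) ⊆
      Set.range fun (ν : Fin n → ℕ) k => (ν k : ℤ) := by
    intro ν hν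
    have hpos (k) : 0 ≤ ν k := le_of_not_gt fun hk => hν (mgDualTerm_eq_zero hq0 s a (hb k) hk)
    exact ⟨fun k => (ν k).toNat, funext fun k => Int.toNat_of_nonneg (hpos k)⟩
  rw [mgDualSum, ← hinj.tsum_eq hsupport]
  simp only [mgDualTerm, jacksonSum, qpRatio, prod_mul_distrib, prod_pow_eq_pow_sum, zpow_natCast,
    ← Nat.cast_sum]

end JacksonIntegrals

end DualMG

open DualMG in
theorem jbar_last_eq_mg_dual_general {q : ℂ} (hq0 : q ≠ 0) (hq1 : ‖q‖ < 1) {n : ℕ}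
    {a b : Fin (n + 1) → ℂ} (ha : ∀ i, a i ≠ 0) (hb : ∀ i, b i ≠ 0)
    (hbal : ‖q‖ < ‖(∏ j, a j) * ∏ j, b j‖)
    (hab : ∀ (j : Fin (n + 1)) (k : Fin n) (m : ℕ), a j * b (Fin.castSucc k) ≠ (q ^ m)⁻¹) :
    jbarLastSum q a b =
      mgDualSum q (q * (∏ j, a j)⁻¹ * (∏ j, b j)⁻¹)
          (fun k => a (Fin.castSucc k)) (fun k => b (Fin.castSucc k))
          (fun k => b (Fin.castSucc k)) *
        ∏ i : Fin n, qp q (q * (a (Fin.castSucc i))⁻¹ * (b (Fin.last n))⁻¹) /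
          qp q (a (Fin.last n) * b (Fin.castSucc i)) := by
  set s := q * (∏ j, a j)⁻¹ * (∏ j, b j)⁻¹ with hs_def
  have hprod_a : ∏ j, a j ≠ 0 := prod_ne_zero_iff.2 fun j _ => ha j
  have hprod_b : ∏ j, b j ≠ 0 := prod_ne_zero_iff.2 fun j _ => hb j
  have hs0 : s ≠ 0 := mul_ne_zero (mul_ne_zero hq0 (inv_ne_zero hprod_a)) (inv_ne_zero hprod_b)
  have hs : ‖s‖ < 1 := by
    rw [hs_def, mul_assoc, ← mul_inv, norm_mul, norm_inv, ← div_eq_mul_inv]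
    exact (div_lt_one ((norm_nonneg q).trans_lt hbal)).2 hbal
  have hpole (j) (k : Fin n) (m : ℕ) : a j * (b k.castSucc * q ^ m) ≠ 1 := fun h =>
    hab j k m (eq_inv_of_mul_eq_one_left (by rwa [mul_assoc]))
  have hC : q * (b (Fin.last n))⁻¹ =
      s * ((∏ i : Fin n, a i.castSucc) * ∏ i : Fin n, b i.castSucc) * a (Fin.last n) := by
    have hprod_a' : ∏ i : Fin n, a i.castSucc ≠ 0 := prod_ne_zero_iff.2 fun i _ => ha i.castSucc
    have hprod_b' : ∏ i : Fin n, b i.castSucc ≠ 0 := prod_ne_zero_iff.2 fun i _ => hb i.castSucc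
    have ha_last := ha (Fin.last n)
    have hb_last := hb (Fin.last n)
    rw [hs_def, Fin.prod_univ_castSucc, Fin.prod_univ_castSucc]
    field_simp
  have hqp_ne (i : Fin n) : qp q (a (Fin.last n) * b i.castSucc) ≠ 0 :=
    qp_ne_zero hq1 fun m => by simpa only [mul_assoc] using hpole (Fin.last n) i m
  have hmain := jacksonSum_dualWeight_mul_prod_qp hq0 hq1 hs0 hs (fun i => ha i.castSucc)
    (fun i => hb i.castSucc) (ha (Fin.last n)) hC (fun j => hpole j.castSucc) (hpole (Fin.last n))
  rw [jbarLastSum_eq_jacksonSum, mgDualSum_self_eq_jacksonSum hq0 s _ fun i => hb i.castSucc,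
    prod_div_distrib, ← mul_div_assoc, eq_div_iff (prod_ne_zero_iff.2 fun i _ => hqp_ne i)]
  simp only [mul_right_comm q _ (b (Fin.last n))⁻¹]
  linear_combination (1 - q) ^ n * hmain

/-- The truncated dual Dixon–Anderson sum in terms of the truncated dual
Milne–Gustafson sum (Corollary 4.6). -/
theorem jbar_last_eq_mg_dual
    (q : ℝ) (hq0 : 0 < q) (hq1 : q < 1) (n : ℕ) (hn : 1 ≤ n)
    (a b : Fin (n + 1) → ℂ) (ha : ∀ i, a i ≠ 0) (hb : ∀ i, b i ≠ 0)
    (hbal : (q : ℝ) < ‖(∏ j, a j) * ∏ j, b j‖)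
    (hab : ∀ (j : Fin (n + 1)) (k : Fin n) (m : ℕ),
      a j * b (Fin.castSucc k) ≠ ((q : ℂ) ^ m)⁻¹) :
    jbarLastSum (q : ℂ) a b =
      mgDualSum (q : ℂ) ((q : ℂ) * (∏ j, a j)⁻¹ * (∏ j, b j)⁻¹)
          (fun k => a (Fin.castSucc k)) (fun k => b (Fin.castSucc k))
          (fun k => b (Fin.castSucc k)) *
        ∏ i : Fin n, qp (q : ℂ) ((q : ℂ) * (a (Fin.castSucc i))⁻¹ * (b (Fin.last n))⁻¹) /
          qp (q : ℂ) (a (Fin.last n) * b (Fin.castSucc i)) := by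
  exact jbar_last_eq_mg_dual_general (by exact_mod_cast hq0.ne') (by simpa [abs_of_pos hq0]) ha hb
    (by simpa [abs_of_pos hq0] using hbal) hab
end
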